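/- Let θ > 0 and, for each N ≥ 1, let α = α(N) > 0 be real and M = M(N) ≥ N an integer, with α(N)/N → α̂ ≥ 0 and M(N)/N → M̂ as N → ∞. Let y = y(N) be distributed as the β-Jacobi ensemble P_θ^{α,M,N}. Then for every m ≥ 3 and all positive integers k_1,…,k_m, the joint cumulant satisfies κ( 𝔓_{k_1}(y), …, 𝔓_{k_m}(y) ) → 0 as N → ∞. -/

import Mathlib

open MeasureTheory

/-- The (unnormalized) β-Jacobi density `∏_{i<j}|x_i−x_j|^{2θ} ∏_i x_i^{θα−1}(1−x_i)^{θ(M−N)+θ−1}`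
with `β = 2θ`. -/
noncomputable def jacobiDensity (θ α : ℝ) (M N : ℕ) (x : Fin N → ℝ) : ℝ :=
  (∏ p ∈ Finset.univ.filter (fun p : Fin N × Fin N => p.1 < p.2),
      |x p.1 - x p.2| ^ (2 * θ)) *
    ∏ i : Fin N, (x i ^ (θ * α - 1) * (1 - x i) ^ (θ * ((M : ℝ) - (N : ℝ)) + θ - 1))

/-- The unnormalized β-Jacobi measure on `[0,1]^N`. -/
noncomputable def jacobiMeasureRaw (θ α : ℝ) (M N : ℕ) : Measure (Fin N → ℝ) :=
  (volume.restrict (Set.univ.pi fun _ : Fin N => Set.Icc (0 : ℝ) 1)).withDensity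
    fun x => ENNReal.ofReal (jacobiDensity θ α M N x)

/-- The β-Jacobi ensemble `P_θ^{α,M,N}`: the normalized β-Jacobi measure on `[0,1]^N`. -/
noncomputable def jacobiEnsemble (θ α : ℝ) (M N : ℕ) : Measure (Fin N → ℝ) :=
  (jacobiMeasureRaw θ α M N Set.univ)⁻¹ • jacobiMeasureRaw θ α M N


open scoped Classical

/-- `P` is a set partition of `{1,…,m}` (as subsets of `Fin m`). -/
def IsSetPartition {m : ℕ} (P : Finset (Finset (Fin m))) : Prop :=
  (∀ T ∈ P, T.Nonempty) ∧ (∀ T ∈ P, ∀ T' ∈ P, T ≠ T' → Disjoint T T') ∧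
    (∀ i : Fin m, ∃ T ∈ P, i ∈ T)

/-- The joint cumulant `κ(v_1,…,v_m) = ∑_π (−1)^{d−1}(d−1)! ∏_{ℓ} E[∏_{i∈S_ℓ} v_i]`,
the sum over set partitions `π = {S_1,…,S_d}` of `{1,…,m}`. -/
noncomputable def jointCumulant {Ω : Type*} [MeasurableSpace Ω] (μ : Measure Ω)
    {m : ℕ} (v : Fin m → Ω → ℂ) : ℂ :=
  ∑ P ∈ Finset.univ.filter (fun P : Finset (Finset (Fin m)) => IsSetPartition P),
    (-1 : ℂ) ^ (P.card - 1) * (Nat.factorial (P.card - 1) : ℂ) *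
      ∏ S ∈ P, ∫ ω, ∏ i ∈ S, v i ω ∂μ

/-!
The maps `t ↦ t + s t^{k+1} (1 - t)`, applied in each coordinate, preserve the cube for small `s`;
differentiating the change of variables formula at `s = 0` gives linear relations, the loop
equations, between the mixed moments of the power sums. In terms of the exponential generating
series `Z` of these moments, dividing by `Z` turns them into a recursion for the derivatives of
`log Z`, whose coefficients are the joint cumulants. Because `𝔓₀ = N` is deterministic, the
quadratic terms contribute `2 θ N` to the coefficient of the cumulants involving `𝔓_{k+1}`.

Induction on the total degree `k₁ + ⋯ + k_m` now bounds `N^{m-2} κ(𝔓_{k₁}, …, 𝔓_{k_m})` uniformly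
in `α` and `M`. The recursion for a cumulant of order `m` also contains cumulants of the same
degree, of order `m + 1` with a relative factor `N⁻²` and of order `m - 1` with a factor of
order `1`; with the weight `R^{-m}` for a large constant `R`, both are absorbed at a cumulant of
maximal size.
-/

/-- The exponential generating series `∑ f s · t^s / s!` with coefficients in `R`, in commuting
variables indexed by `X`. A monomial is encoded as the multiset `s` of its variables, and the
factorials are left out of the coefficients (in contrast to `MvPowerSeries`), so that the mixed
moments of a family of random variables are the coefficients of a series. -/
def ExpSeries (X R : Type*) : Type _ := Multiset X → R

noncomputable section

namespace ExpSeries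

section Ring

variable {X R : Type*} [CommRing R]

instance : AddCommGroup (ExpSeries X R) :=
  inferInstanceAs (AddCommGroup (Multiset X → R))

instance : Module R (ExpSeries X R) := inferInstanceAs (Module R (Multiset X → R))

/-- The coefficient of `t^s / s!`. -/
def coeff (s : Multiset X) : ExpSeries X R →ₗ[R] R where
  toFun f := f s
  map_add' _ _ := rfl
  map_smul' _ _ := rfl

/-- The series with prescribed coefficients. -/
def mk (f : Multiset X → R) : ExpSeries X R := f

@[simp]
theorem coeff_mk (f : Multiset X → R) (s : Multiset X) : coeff s (mk f) = f s := rfl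

@[ext]
theorem ext {f g : ExpSeries X R} (h : ∀ s, coeff s f = coeff s g) : f = g := funext h

instance : Mul (ExpSeries X R) :=
  ⟨fun f g => mk fun s => (s.antidiagonal.map fun p => coeff p.1 f * coeff p.2 g).sum⟩

instance : One (ExpSeries X R) := ⟨mk fun s => if s = 0 then 1 else 0⟩

/-- The partial derivative with respect to the variable `x`. -/
def D (x : X) : ExpSeries X R →ₗ[R] ExpSeries X R where
  toFun f := mk fun s => coeff (x ::ₘ s) f
  map_add' _ _ := rfl
  map_smul' _ _ := rfl

@[simp]
theorem coeff_D (x : X) (f : ExpSeries X R) (s : Multiset X) :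
    coeff s (D x f) = coeff (x ::ₘ s) f := rfl

theorem coeff_mul (f g : ExpSeries X R) (s : Multiset X) :
    coeff s (f * g) = (s.antidiagonal.map fun p => coeff p.1 f * coeff p.2 g).sum := rfl

theorem coeff_one (s : Multiset X) :
    coeff s (1 : ExpSeries X R) = if s = 0 then 1 else 0 := rfl

@[simp]
theorem coeff_zero_mul (f g : ExpSeries X R) : coeff 0 (f * g) = coeff 0 f * coeff 0 g := by
  simp [coeff_mul]

@[simp]
theorem coeff_zero_one : coeff 0 (1 : ExpSeries X R) = 1 := by
  simp [coeff_one]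

@[simp]
theorem D_one (x : X) : D x (1 : ExpSeries X R) = 0 := by
  ext s
  simp [coeff_one]

@[simp]
theorem D_mul (x : X) (f g : ExpSeries X R) : D x (f * g) = D x f * g + f * D x g := by
  ext s
  simp [coeff_mul, Multiset.antidiagonal_cons, add_comm]

theorem D_comm (x y : X) (f : ExpSeries X R) : D x (D y f) = D y (D x f) := by
  ext s
  simp [Multiset.cons_swap]

private theorem mul_comm' (f g : ExpSeries X R) : f * g = g * f := by
  ext s
  rw [coeff_mul, ← Multiset.map_swap_antidiagonal, Multiset.map_map, coeff_mul]
  simp [mul_comm]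

private theorem add_mul' (f g h : ExpSeries X R) : (f + g) * h = f * h + g * h := by
  ext s
  simp [coeff_mul, add_mul]

private theorem zero_mul' (f : ExpSeries X R) : 0 * f = 0 := by
  ext s
  simp [coeff_mul]

private theorem one_mul' (f : ExpSeries X R) : 1 * f = f := by
  ext s
  induction s using Multiset.induction generalizing f with
  | empty => simp
  | cons x s ih => rw [← coeff_D, D_mul, D_one, zero_mul', zero_add, ih, coeff_D]

private theorem mul_assoc' (f g h : ExpSeries X R) : f * g * h = f * (g * h) := by
  ext s
  induction s using Multiset.induction generalizing f g h with
  | empty => simp [mul_assoc]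
  | cons x s ih =>
    simp only [← coeff_D, D_mul, add_mul', map_add, ih]
    rw [mul_comm' f (_ + _), add_mul', mul_comm' _ f, mul_comm' _ f, map_add, add_assoc]

instance : CommRing (ExpSeries X R) where
  __ := (inferInstance : AddCommGroup (ExpSeries X R))
  mul_comm := mul_comm'
  mul_assoc := mul_assoc'
  one_mul := one_mul'
  mul_one f := by rw [mul_comm', one_mul']
  left_distrib f g h := by rw [mul_comm', add_mul', mul_comm' g, mul_comm' h]
  right_distrib := add_mul'
  zero_mul := zero_mul'
  mul_zero f := by rw [mul_comm', zero_mul']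

instance : Algebra R (ExpSeries X R) :=
  Algebra.ofModule (fun c f g => by ext s; simp [coeff_mul, mul_assoc, Multiset.sum_map_mul_left])
    (fun c f g => by ext s; simp [coeff_mul, mul_left_comm, Multiset.sum_map_mul_left])

theorem coeff_pow_eq_zero {f : ExpSeries X R} (hf : coeff 0 f = 0) {d : ℕ} {s : Multiset X}
    (hs : s.card < d) : coeff s (f ^ d) = 0 := by
  induction d generalizing s with
  | zero => omega
  | succ d ih =>
    rw [pow_succ, coeff_mul]
    refine Multiset.sum_eq_zero fun r hr => ?_
    obtain ⟨⟨t, u⟩, hp, rfl⟩ := Multiset.mem_map.1 hr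
    obtain rfl : t + u = s := Multiset.mem_antidiagonal.1 hp
    rcases eq_or_ne u 0 with rfl | hu
    · rw [hf, mul_zero]
    · have := Multiset.card_pos.2 hu
      rw [Multiset.card_add] at hs
      rw [ih (show t.card < d by omega), zero_mul]

theorem coeff_mul_congr {f f' g g' : ExpSeries X R} {s : Multiset X}
    (hf : ∀ t ≤ s, coeff t f = coeff t f') (hg : ∀ t ≤ s, coeff t g = coeff t g') :
    coeff s (f * g) = coeff s (f' * g') := by
  rw [coeff_mul, coeff_mul]
  congr 1
  refine Multiset.map_congr rfl fun p hp => ?_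
  rw [Multiset.mem_antidiagonal] at hp
  rw [hf _ (hp ▸ Multiset.le_add_right _ _), hg _ (hp ▸ Multiset.le_add_left _ _)]

theorem isUnit_of_coeff_zero_eq_one {f : ExpSeries X R} (hf : coeff 0 f = 1) : IsUnit f := by
  have hu : coeff 0 (1 - f) = 0 := by simp [hf]
  -- the geometric series of `1 - f`, truncated at the degree of the coefficient
  let g : ExpSeries X R :=
    mk fun s => coeff s (∑ d ∈ Finset.range (s.card + 1), (1 - f) ^ d)
  refine IsUnit.of_mul_eq_one g ?_
  ext s
  have hg : ∀ t ≤ s, coeff t g = coeff t (∑ d ∈ Finset.range (s.card + 1), (1 - f) ^ d) := by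
    intro t ht
    simp only [g, coeff_mk, map_sum]
    refine Finset.sum_subset (by simpa using Multiset.card_le_card ht) fun d _ hd => ?_
    exact coeff_pow_eq_zero hu (by simpa using hd)
  have hgeom := mul_neg_geom_sum (1 - f) (s.card + 1)
  rw [sub_sub_cancel] at hgeom
  rw [coeff_mul_congr (fun _ _ => rfl) hg, hgeom, map_sub,
    coeff_pow_eq_zero hu (Nat.lt_succ_self _), sub_zero]

/-- The logarithmic derivative `∂ₓ log Z`. When `Z` is the series of moments of a family of random
variables, its coefficient at `s` is the joint cumulant indexed by `x ::ₘ s`. -/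
def logDeriv (Z : ExpSeries X R) (x : X) : ExpSeries X R :=
  D x Z * Ring.inverse Z

variable {Z : ExpSeries X R}

theorem logDeriv_mul_self (hZ : coeff 0 Z = 1) (x : X) : logDeriv Z x * Z = D x Z := by
  rw [logDeriv, mul_assoc, Ring.inverse_mul_cancel _ (isUnit_of_coeff_zero_eq_one hZ), mul_one]

theorem D_D_eq_logDeriv_mul (hZ : coeff 0 Z = 1) (x y : X) :
    D x (D y Z) = (D x (logDeriv Z y) + logDeriv Z x * logDeriv Z y) * Z := by
  rw [← logDeriv_mul_self hZ y, D_mul, ← logDeriv_mul_self hZ x]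
  ring

theorem mul_right_cancel_of_coeff_zero (hZ : coeff 0 Z = 1) {f g : ExpSeries X R}
    (h : f * Z = g * Z) : f = g :=
  (isUnit_of_coeff_zero_eq_one hZ).mul_right_cancel h

theorem D_logDeriv_comm (hZ : coeff 0 Z = 1) (x y : X) :
    D x (logDeriv Z y) = D y (logDeriv Z x) := by
  refine mul_right_cancel_of_coeff_zero hZ ?_
  have h := D_comm x y Z
  rw [D_D_eq_logDeriv_mul hZ, D_D_eq_logDeriv_mul hZ y] at h
  linear_combination h

end Ring

section InsertionSum

variable {X R : Type*} [CommRing R] [DecidableEq X]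

/-- The first order differential operator `∑ₓ t_x F x`, in terms of coefficients. -/
def insertionSum (F : X → ExpSeries X R) : ExpSeries X R :=
  mk fun s => (s.map fun x => coeff (s.erase x) (F x)).sum

theorem coeff_insertionSum (F : X → ExpSeries X R) (s : Multiset X) :
    coeff s (insertionSum F) = (s.map fun x => coeff (s.erase x) (F x)).sum := rfl

theorem D_insertionSum (x : X) (F : X → ExpSeries X R) :
    D x (insertionSum F) = F x + insertionSum fun y => D x (F y) := by
  ext s
  simp only [coeff_D, coeff_insertionSum, Multiset.map_cons, Multiset.sum_cons,
    Multiset.erase_cons_head, map_add]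
  congr 2
  refine Multiset.map_congr rfl fun y hy => ?_
  rw [Multiset.erase_cons_tail_of_mem hy]

theorem insertionSum_add (F G : X → ExpSeries X R) :
    insertionSum (fun x => F x + G x) = insertionSum F + insertionSum G := by
  ext s
  simp [coeff_insertionSum]

theorem insertionSum_mul (F : X → ExpSeries X R) (g : ExpSeries X R) :
    insertionSum (fun x => F x * g) = insertionSum F * g := by
  ext s
  induction s using Multiset.induction generalizing F g with
  | empty => simp [coeff_insertionSum]
  | cons x s ih =>
    simp only [← coeff_D, D_insertionSum, D_mul, insertionSum_add, map_add, ih, add_mul]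
    ring

end InsertionSum

section Rescale

variable {X R : Type*} [CommRing R]

/-- The substitution `t ↦ c t` in all variables. -/
def rescale (c : R) : ExpSeries X R →ₐ[R] ExpSeries X R :=
  AlgHom.ofLinearMap
    { toFun := fun f => mk fun s => c ^ s.card * coeff s f
      map_add' := fun f g => by ext s; simp [mul_add]
      map_smul' := fun r f => by ext s; simp [mul_left_comm] }
    (by ext s; by_cases hs : s = 0 <;> simp [coeff_one, hs])
    (fun f g => by
      ext s
      simp only [LinearMap.coe_mk, AddHom.coe_mk, coeff_mk, coeff_mul, ← Multiset.sum_map_mul_left]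
      congr 1
      refine Multiset.map_congr rfl fun p hp => ?_
      rw [← Multiset.mem_antidiagonal.1 hp, Multiset.card_add, pow_add]
      ring)

@[simp]
theorem coeff_rescale (c : R) (f : ExpSeries X R) (s : Multiset X) :
    coeff s (rescale c f) = c ^ s.card * coeff s f := rfl

theorem D_rescale (c : R) (x : X) (f : ExpSeries X R) :
    D x (rescale c f) = c • rescale c (D x f) := by
  ext s
  simp [pow_succ, mul_left_comm, mul_assoc]

theorem rescale_insertionSum [DecidableEq X] (c : R) (F : X → ExpSeries X R) :
    rescale c (insertionSum F) = c • insertionSum fun x => rescale c (F x) := by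
  ext s
  simp only [coeff_rescale, map_smul, smul_eq_mul, coeff_insertionSum, ← Multiset.sum_map_mul_left]
  congr 1
  refine Multiset.map_congr rfl fun x hx => ?_
  rw [← mul_assoc, ← pow_succ', Multiset.card_erase_add_one hx]

theorem insertionSum_smul [DecidableEq X] (c : R) (F : X → ExpSeries X R) :
    insertionSum (fun x => c • F x) = c • insertionSum F := by
  ext s
  simp [coeff_insertionSum, Multiset.sum_map_mul_left]

end Rescale

section Bounds

variable {X : Type*}

theorem abs_sum_range_le {f : ℕ → ℝ} {n : ℕ} {B : ℝ} (hf : ∀ l < n, |f l| ≤ B) :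
    |∑ l ∈ Finset.range n, f l| ≤ n * B := by
  refine (Finset.abs_sum_le_sum_abs _ _).trans ?_
  simpa using Finset.sum_le_card_nsmul _ _ B fun l hl => hf l (Finset.mem_range.1 hl)

theorem sum_le_sum_of_le {s t : Multiset ℕ} (h : s ≤ t) : s.sum ≤ t.sum := by
  obtain ⟨u, rfl⟩ := Multiset.le_iff_exists_add.1 h
  simp

theorem card_le_sum_of_zero_notMem {s : Multiset ℕ} (hs : 0 ∉ s) : s.card ≤ s.sum := by
  simpa using Multiset.card_nsmul_le_sum (a := 1) fun x hx =>
    Nat.one_le_iff_ne_zero.2 fun h => hs (h ▸ hx)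

theorem finite_add_sum_eq (d : ℕ) :
    {p : ℕ × Multiset ℕ | p.1 + p.2.sum = d ∧ 0 ∉ p.2}.Finite := by
  refine ((Set.finite_Iic d).prod (Set.finite_Iic (d • Multiset.range (d + 1)))).subset ?_
  rintro ⟨x, s⟩ ⟨hxs, hs⟩
  change x + s.sum = d at hxs
  refine ⟨by simpa using by omega, Multiset.le_iff_count.2 fun y => ?_⟩
  by_cases hy : y ∈ s
  · have hyd : y ≤ d := (Multiset.le_sum_of_mem hy).trans (by omega)
    rw [Multiset.count_nsmul, Multiset.count_eq_one_of_mem (Multiset.nodup_range _)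
      (Multiset.mem_range.2 (by omega)), mul_one]
    exact ((s.count_le_card y).trans (card_le_sum_of_zero_notMem hs)).trans (by omega)
  · rw [Multiset.count_eq_zero_of_notMem hy]
    exact Nat.zero_le _

theorem abs_coeff_mul_le {f g : ExpSeries X ℝ} {s : Multiset X} {A B : ℝ} (hA : 0 ≤ A)
    (hf : ∀ t ≤ s, |coeff t f| ≤ A) (hg : ∀ t ≤ s, |coeff t g| ≤ B) :
    |coeff s (f * g)| ≤ A * B * 2 ^ s.card := by
  rw [coeff_mul]
  refine (Multiset.abs_sum_le_sum_abs ..).trans ?_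
  rw [Multiset.map_map]
  refine (Multiset.sum_le_card_nsmul _ (A * B) fun r hr => ?_).trans_eq ?_
  · obtain ⟨p, hp, rfl⟩ := Multiset.mem_map.1 hr
    rw [Multiset.mem_antidiagonal] at hp
    simp only [Function.comp_apply, abs_mul]
    exact mul_le_mul (hf _ (hp ▸ Multiset.le_add_right _ _))
      (hg _ (hp ▸ Multiset.le_add_left _ _)) (abs_nonneg _) hA
  · simp [mul_comm]

theorem abs_coeff_D_add_smul_mul_le {f g h : ExpSeries X ℝ} {x : X} {s : Multiset X}
    {c A B C : ℝ} (hA : 0 ≤ A) (hc : 0 ≤ c) (hf : |coeff (x ::ₘ s) f| ≤ C)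
    (hg : ∀ t ≤ s, |coeff t g| ≤ A) (hh : ∀ t ≤ s, |coeff t h| ≤ B) :
    |coeff s (D x f + c • (g * h))| ≤ C + c * (A * B * 2 ^ s.card) := by
  rw [map_add, map_smul, smul_eq_mul, coeff_D]
  refine (abs_add_le _ _).trans (add_le_add hf ?_)
  rw [abs_mul, abs_of_nonneg hc]
  exact mul_le_mul_of_nonneg_left (abs_coeff_mul_le hA hg hh) hc

theorem abs_coeff_insertionSum_le {F : ℕ → ExpSeries ℕ ℝ} {s : Multiset ℕ} {B : ℝ}
    (hF : ∀ x ∈ s, |coeff (s.erase x) (F x)| ≤ B) :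
    |coeff s (insertionSum fun x => (x : ℝ) • F x)| ≤ s.sum * B := by
  rw [coeff_insertionSum]
  refine (Multiset.abs_sum_le_sum_abs ..).trans ?_
  rw [Multiset.map_map, Nat.cast_multiset_sum, ← Multiset.sum_map_mul_right]
  refine Multiset.sum_map_le_sum_map _ _ fun x hx => ?_
  rw [Function.comp_apply, map_smul, smul_eq_mul, abs_mul, Nat.abs_cast]
  exact mul_le_mul_of_nonneg_left (hF x hx) x.cast_nonneg

end Bounds

section LoopEquations

/-- The loop (Dyson–Schwinger) equations of the density
`∏ |x_i - x_j|^{2θ} ∏ x_i^{a-1} (1 - x_i)^{b-1}` on `[0,1]^n`, expressed through the exponential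
series `Z` of the mixed moments of the power sums: `coeff s Z = E ∏_{x ∈ s} 𝔓_x`. -/
structure LoopEquations (θ a b n : ℝ) (Z : ExpSeries ℕ ℝ) : Prop where
  coeff_zero : coeff 0 Z = 1
  D_zero : D 0 Z = n • Z
  loop (k : ℕ) :
    θ • (∑ l ∈ Finset.range (k + 1), D l (D (k - l) Z) -
        ∑ l ∈ Finset.range (k + 2), D l (D (k + 1 - l) Z)) +
      (a - 1 + (1 - θ) * (k + 1)) • D k Z - (a + b - 2 + (1 - θ) * (k + 2)) • D (k + 1) Z +
      insertionSum (fun x : ℕ => (x : ℝ) • (D (k + x) Z - D (k + 1 + x) Z)) = 0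

/-- The cumulants in the normalization in which they turn out to be bounded: the coefficient at
`s` is `n ^ (card s - 1)` times the joint cumulant indexed by `x ::ₘ s`. -/
def scaledCumulant (n : ℝ) (Z : ExpSeries ℕ ℝ) (x : ℕ) : ExpSeries ℕ ℝ :=
  n⁻¹ • rescale n (logDeriv Z x)

namespace LoopEquations

variable {θ a b n : ℝ} {Z : ExpSeries ℕ ℝ}

theorem logDeriv_zero (h : LoopEquations θ a b n Z) : logDeriv Z 0 = n • 1 := by
  refine mul_right_cancel_of_coeff_zero h.coeff_zero ?_
  rw [logDeriv_mul_self h.coeff_zero, h.D_zero, smul_mul_assoc, one_mul]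

theorem D_zero_logDeriv (h : LoopEquations θ a b n Z) (x : ℕ) : D 0 (logDeriv Z x) = 0 := by
  rw [D_logDeriv_comm h.coeff_zero, h.logDeriv_zero, map_smul, D_one, smul_zero]

theorem logDeriv_loop (h : LoopEquations θ a b n Z) (k : ℕ) :
    θ • (∑ l ∈ Finset.range (k + 1),
          (D l (logDeriv Z (k - l)) + logDeriv Z l * logDeriv Z (k - l)) -
        ∑ l ∈ Finset.range (k + 2),
          (D l (logDeriv Z (k + 1 - l)) + logDeriv Z l * logDeriv Z (k + 1 - l))) +
      (a - 1 + (1 - θ) * (k + 1)) • logDeriv Z k -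
      (a + b - 2 + (1 - θ) * (k + 2)) • logDeriv Z (k + 1) +
      insertionSum (fun x : ℕ => (x : ℝ) • (logDeriv Z (k + x) - logDeriv Z (k + 1 + x))) = 0 := by
  refine mul_right_cancel_of_coeff_zero h.coeff_zero ?_
  have hloop := h.loop k
  simp only [D_D_eq_logDeriv_mul h.coeff_zero] at hloop
  simp only [← logDeriv_mul_self h.coeff_zero, ← sub_mul, ← Finset.sum_mul, ← smul_mul_assoc,
    insertionSum_mul, ← add_mul] at hloop
  rw [hloop, zero_mul]

/-- The extreme terms of the second sum in the loop equation are `n • logDeriv Z (k + 1)`, which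
makes that equation a recursion for `logDeriv Z (k + 1)`. -/
theorem logDeriv_succ (h : LoopEquations θ a b n Z) (k : ℕ) :
    (2 * θ * n + (a + b - 2 + (1 - θ) * (k + 2))) • logDeriv Z (k + 1) =
      θ • (∑ l ∈ Finset.range (k + 1),
          (D l (logDeriv Z (k - l)) + logDeriv Z l * logDeriv Z (k - l)) -
        ∑ l ∈ Finset.range k,
          (D (l + 1) (logDeriv Z (k - l)) + logDeriv Z (l + 1) * logDeriv Z (k - l))) +
      (a - 1 + (1 - θ) * (k + 1)) • logDeriv Z k +
      insertionSum (fun x : ℕ => (x : ℝ) • (logDeriv Z (k + x) - logDeriv Z (k + 1 + x))) := by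
  have hsplit : ∑ l ∈ Finset.range (k + 2),
        (D l (logDeriv Z (k + 1 - l)) + logDeriv Z l * logDeriv Z (k + 1 - l)) =
      ∑ l ∈ Finset.range k, (D (l + 1) (logDeriv Z (k - l)) +
        logDeriv Z (l + 1) * logDeriv Z (k - l)) + (2 * n) • logDeriv Z (k + 1) := by
    rw [Finset.sum_range_succ, Finset.sum_range_succ']
    simp only [Nat.add_sub_add_right, Nat.sub_zero, Nat.sub_self, h.D_zero_logDeriv,
      h.logDeriv_zero, map_smul, D_one, smul_zero, zero_add, smul_mul_assoc, mul_smul_comm,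
      one_mul, mul_one]
    module
  have hloop := h.logDeriv_loop k
  rw [hsplit] at hloop
  rw [← sub_eq_zero, ← neg_eq_zero, ← hloop]
  module

theorem scaledCumulant_zero (h : LoopEquations θ a b n Z) (hn : n ≠ 0) :
    scaledCumulant n Z 0 = 1 := by
  rw [scaledCumulant, h.logDeriv_zero, map_smul, map_one, smul_smul, inv_mul_cancel₀ hn, one_smul]

theorem rescale_logDeriv (hn : n ≠ 0) (x : ℕ) :
    rescale n (logDeriv Z x) = n • scaledCumulant n Z x := by
  rw [scaledCumulant, smul_smul, mul_inv_cancel₀ hn, one_smul]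

theorem rescale_D_logDeriv (hn : n ≠ 0) (l x : ℕ) :
    rescale n (D l (logDeriv Z x)) = D l (scaledCumulant n Z x) := by
  rw [scaledCumulant, map_smul, D_rescale, smul_smul, inv_mul_cancel₀ hn, one_smul]

theorem scaledCumulant_succ (h : LoopEquations θ a b n Z) (hn : n ≠ 0) (k : ℕ) :
    ((2 * θ * n + (a + b - 2 + (1 - θ) * (k + 2))) * n) • scaledCumulant n Z (k + 1) =
      θ • (∑ l ∈ Finset.range (k + 1), (D l (scaledCumulant n Z (k - l)) +
            n ^ 2 • (scaledCumulant n Z l * scaledCumulant n Z (k - l))) -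
        ∑ l ∈ Finset.range k, (D (l + 1) (scaledCumulant n Z (k - l)) +
            n ^ 2 • (scaledCumulant n Z (l + 1) * scaledCumulant n Z (k - l)))) +
      ((a - 1 + (1 - θ) * (k + 1)) * n) • scaledCumulant n Z k +
      n ^ 2 • insertionSum (fun x : ℕ =>
        (x : ℝ) • (scaledCumulant n Z (k + x) - scaledCumulant n Z (k + 1 + x))) := by
  have hrec := congrArg (rescale n) (h.logDeriv_succ k)
  simp only [map_add, map_sub, map_smul, map_sum, map_mul, rescale_insertionSum,
    rescale_logDeriv hn, rescale_D_logDeriv hn, ← smul_sub, smul_comm _ n, insertionSum_smul,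
    smul_mul_smul_comm] at hrec
  simpa only [smul_smul, mul_comm n, ← pow_two] using hrec

theorem coeff_scaledCumulant_eq_zero_or (h : LoopEquations θ a b n Z) (hn : n ≠ 0) {d x : ℕ}
    {s : Multiset ℕ} (hxs : x + s.sum = d + 1) :
    coeff s (scaledCumulant n Z x) = 0 ∨ ∃ k, x = k + 1 ∧ k + s.sum = d ∧ 0 ∉ s := by
  by_cases h0 : 0 ∈ s
  · obtain ⟨t, rfl⟩ := Multiset.exists_cons_of_mem h0
    rw [← coeff_D, scaledCumulant, map_smul, D_rescale, h.D_zero_logDeriv]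
    simp
  cases x with
  | zero =>
    have hs : s ≠ 0 := by
      rintro rfl
      simp at hxs
    rw [h.scaledCumulant_zero hn, coeff_one, if_neg hs]
    exact Or.inl rfl
  | succ k => exact Or.inr ⟨k, rfl, by omega, h0⟩

theorem add_add_le_leadingCoeff {k : ℕ} (hθ : 0 ≤ θ) (hb : 0 ≤ b) (hk : (k : ℝ) + 2 ≤ n) :
    a + k + θ * n ≤ 2 * θ * n + (a + b - 2 + (1 - θ) * (k + 2)) := by
  nlinarith [mul_le_mul_of_nonneg_left hk hθ]

theorem abs_lowerCoeff_le {k : ℕ} (hθ : 0 ≤ θ) (ha : 0 ≤ a) (hb : 0 ≤ b) (hk : (k : ℝ) + 2 ≤ n) :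
    |a - 1 + (1 - θ) * (k + 1)| ≤ 2 * (2 * θ * n + (a + b - 2 + (1 - θ) * (k + 2))) := by
  rw [abs_le]
  constructor <;> nlinarith [k.cast_nonneg (α := ℝ), mul_le_mul_of_nonneg_left hk hθ]

/-- `B₁` and `B₂` bound the cumulants of the same total degree as the one being estimated: `B₁`
those of one order higher, which enter with a relative factor `n⁻²`, and `B₂` those of one order
lower. -/
theorem leadingCoeff_mul_abs_coeff_scaledCumulant_succ_le (h : LoopEquations θ a b n Z)
    (hθ : 0 < θ) (ha : 0 ≤ a) (hb : 0 ≤ b) {k : ℕ} (hk : (k : ℝ) + 2 ≤ n) {s : Multiset ℕ}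
    {C B₁ B₂ : ℝ} (hC : 0 ≤ C)
    (hlow : ∀ x t, x + t.sum ≤ k + s.sum → |coeff t (scaledCumulant n Z x)| ≤ C)
    (hB₁ : ∀ l < k, |coeff ((l + 1) ::ₘ s) (scaledCumulant n Z (k - l))| ≤ B₁)
    (hB₂ : ∀ x ∈ s, |coeff (s.erase x) (scaledCumulant n Z (k + 1 + x))| ≤ B₂) :
    (2 * θ * n + (a + b - 2 + (1 - θ) * (k + 2))) * n * |coeff s (scaledCumulant n Z (k + 1))| ≤
      θ * ((k + 1) * (C + n ^ 2 * (C * C * 2 ^ s.card)) +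
        k * (B₁ + n ^ 2 * (C * C * 2 ^ s.card))) +
      2 * (2 * θ * n + (a + b - 2 + (1 - θ) * (k + 2))) * n * C +
      n ^ 2 * (s.sum * (C + B₂)) := by
  have hn : 0 < n := by linarith [k.cast_nonneg (α := ℝ)]
  have hQ := add_add_le_leadingCoeff (a := a) hθ.le hb hk
  have hrec := congrArg (coeff s) (h.scaledCumulant_succ hn.ne' k)
  set Q := 2 * θ * n + (a + b - 2 + (1 - θ) * (k + 2))
  set u := scaledCumulant n Z
  set P := C * C * 2 ^ s.card
  have hQ0 : 0 ≤ Q := by nlinarith [k.cast_nonneg (α := ℝ)]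
  have hterm : ∀ l ≤ k, ∀ j ≤ k, ∀ B, |coeff (l ::ₘ s) (u j)| ≤ B →
      |coeff s (D l (u j) + n ^ 2 • (u l * u j))| ≤ B + n ^ 2 * P := fun l hl j hj B hB =>
    abs_coeff_D_add_smul_mul_le hC (sq_nonneg n) hB
      (fun t ht => hlow l t (add_le_add hl (sum_le_sum_of_le ht)))
      (fun t ht => hlow j t (add_le_add hj (sum_le_sum_of_le ht)))
  have hS₁ := abs_sum_range_le (f := fun l => coeff s (D l (u (k - l)) + n ^ 2 • (u l * u (k - l))))
    (n := k + 1) fun l hl => hterm l (by omega) (k - l) (by omega) C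
      (hlow _ _ (by rw [Multiset.sum_cons]; omega))
  have hS₂ := abs_sum_range_le
    (f := fun l => coeff s (D (l + 1) (u (k - l)) + n ^ 2 • (u (l + 1) * u (k - l))))
    fun l hl => hterm (l + 1) (by omega) (k - l) (by omega) B₁ (hB₁ l hl)
  have hI : |coeff s (insertionSum fun x : ℕ => (x : ℝ) • (u (k + x) - u (k + 1 + x)))| ≤
      s.sum * (C + B₂) := by
    refine abs_coeff_insertionSum_le fun x hx => ?_
    rw [map_sub]
    refine (abs_sub _ _).trans (add_le_add (hlow _ _ ?_) (hB₂ x hx))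
    rw [add_assoc, Multiset.sum_erase hx]
  have hc : |(a - 1 + (1 - θ) * (k + 1)) * n * coeff s (u k)| ≤ 2 * Q * n * C := by
    rw [abs_mul, abs_mul, abs_of_pos hn]
    gcongr
    exacts [abs_lowerCoeff_le hθ.le ha hb hk, hlow k s le_rfl]
  simp only [map_add, map_sub, map_smul, map_sum, smul_eq_mul] at hrec hS₁ hS₂
  have hQn : 0 ≤ Q * n := by positivity
  rw [← abs_of_nonneg hQn, ← abs_mul, hrec]
  refine (abs_add_le _ _).trans (add_le_add ((abs_add_le _ _).trans (add_le_add ?_ hc)) ?_)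
  · rw [abs_mul, abs_of_pos hθ]
    push_cast at hS₁
    gcongr
    exact (abs_sub _ _).trans (add_le_add hS₁ hS₂)
  · rw [abs_mul, abs_of_pos (by positivity)]
    gcongr

theorem abs_coeff_scaledCumulant_succ_le (h : LoopEquations θ a b n Z)
    (hθ : 0 < θ) (ha : 0 ≤ a) (hb : 0 ≤ b) {k : ℕ} (hk : (k : ℝ) + 2 ≤ n) {s : Multiset ℕ}
    {C B₁ B₂ : ℝ} (hC : 0 ≤ C) (hB₁0 : 0 ≤ B₁) (hB₂0 : 0 ≤ B₂)
    (hlow : ∀ x t, x + t.sum ≤ k + s.sum → |coeff t (scaledCumulant n Z x)| ≤ C)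
    (hB₁ : ∀ l < k, |coeff ((l + 1) ::ₘ s) (scaledCumulant n Z (k - l))| ≤ B₁)
    (hB₂ : ∀ x ∈ s, |coeff (s.erase x) (scaledCumulant n Z (k + 1 + x))| ≤ B₂) :
    |coeff s (scaledCumulant n Z (k + 1))| ≤
      ((k + 1) * C + k * B₁) / n ^ 2 + (2 * k + 1) * (C * C * 2 ^ s.card) +
        s.sum * (C + B₂) / θ + 2 * C := by
  have hn : 0 < n := by linarith [k.cast_nonneg (α := ℝ)]
  have hQ : θ * n ≤ 2 * θ * n + (a + b - 2 + (1 - θ) * (k + 2)) := by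
    linarith [add_add_le_leadingCoeff (a := a) hθ.le hb hk, k.cast_nonneg (α := ℝ)]
  have hmain := leadingCoeff_mul_abs_coeff_scaledCumulant_succ_le h hθ ha hb hk hC hlow hB₁ hB₂
  set Q := 2 * θ * n + (a + b - 2 + (1 - θ) * (k + 2))
  have hQ0 : 0 < Q := lt_of_lt_of_le (by positivity) hQ
  refine le_of_mul_le_mul_left (hmain.trans ?_) (mul_pos hQ0 hn)
  set Y := ((k + 1) * C + k * B₁) / n ^ 2 + (2 * k + 1) * (C * C * 2 ^ s.card) +
    s.sum * (C + B₂) / θ with hY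
  have : 0 ≤ Y := by positivity
  calc _ = θ * n * n * Y + Q * n * (2 * C) := by rw [hY]; field_simp; ring
    _ ≤ Q * n * Y + Q * n * (2 * C) := by gcongr
    _ = Q * n * (Y + 2 * C) := by ring

/-- Feeding a weighted bound `T` on the cumulants of degree `d + 1` back into the recursion halves
it, up to the contribution of the lower degrees. -/
theorem abs_coeff_scaledCumulant_le_add_half (h : LoopEquations θ a b n Z) (hθ : 0 < θ)
    (ha : 0 ≤ a) (hb : 0 ≤ b) {d : ℕ} (hn : (d : ℝ) + 2 ≤ n) {R : ℝ} (hR : 1 ≤ R)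
    (hRθ : 4 * d ≤ R * θ) (hRn : 4 * d * R ≤ n ^ 2) {C T : ℝ} (hC : 0 ≤ C) (hT : 0 ≤ T)
    (hlow : ∀ x t, x + t.sum ≤ d → |coeff t (scaledCumulant n Z x)| ≤ C)
    (htop : ∀ x t, x + t.sum = d + 1 → |coeff t (scaledCumulant n Z x)| ≤ T * R ^ t.card)
    {k : ℕ} {s : Multiset ℕ} (hs : 0 ∉ s) (hks : k + s.sum = d) :
    |coeff s (scaledCumulant n Z (k + 1))| ≤
      (d + 1) * C + (2 * d + 1) * (C * C * 2 ^ d) + d * C / θ + 2 * C + T * R ^ s.card / 2 := by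
  have hn1 : 1 ≤ n ^ 2 := one_le_pow₀ (by linarith [d.cast_nonneg (α := ℝ)])
  have : 0 < R := by linarith
  have hkd : (k : ℝ) ≤ d := by exact_mod_cast (by omega : k ≤ d)
  have hsd : (s.sum : ℝ) ≤ d := by exact_mod_cast (by omega : s.sum ≤ d)
  have hcard : s.card ≤ d := (card_le_sum_of_zero_notMem hs).trans (by omega)
  refine (h.abs_coeff_scaledCumulant_succ_le hθ ha hb (k := k) (s := s) (C := C)
    (B₁ := T * R ^ s.card * R) (B₂ := T * R ^ s.card / R) (by linarith) hC (by positivity)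
    (by positivity) (hks ▸ hlow) (fun l hl => ?_) (fun x hx => ?_)).trans ?_
  · refine (htop _ _ ?_).trans_eq ?_
    · rw [Multiset.sum_cons]; omega
    · rw [Multiset.card_cons, pow_succ, mul_assoc]
  · refine (htop _ _ ?_).trans_eq ?_
    · rw [add_assoc, Multiset.sum_erase hx]; omega
    · rw [← Multiset.card_erase_add_one hx, pow_succ]
      field_simp
  · have hB₁ : k * (T * R ^ s.card * R) / n ^ 2 ≤ T * R ^ s.card / 4 := by
      rw [div_le_iff₀ (by positivity)]
      have hkR : 4 * k * R ≤ n ^ 2 := hRn.trans' (by gcongr)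
      nlinarith [mul_le_mul_of_nonneg_left hkR (show 0 ≤ T * R ^ s.card by positivity)]
    have hB₂ : s.sum * (T * R ^ s.card / R) / θ ≤ T * R ^ s.card / 4 := by
      rw [mul_div_assoc', div_div, div_le_iff₀ (by positivity)]
      have hsR : 4 * (s.sum : ℝ) ≤ R * θ := hRθ.trans' (by gcongr)
      nlinarith [mul_le_mul_of_nonneg_left hsR (show 0 ≤ T * R ^ s.card by positivity)]
    have hC₁ : (k + 1) * C / n ^ 2 ≤ (d + 1) * C :=
      (div_le_self (by positivity) hn1).trans (by gcongr)
    have hC₂ : (2 * k + 1) * (C * C * 2 ^ s.card) ≤ (2 * d + 1) * (C * C * 2 ^ d) := by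
      gcongr
      norm_num
    have hC₃ : s.sum * C / θ ≤ d * C / θ := by gcongr
    rw [add_div, mul_add, add_div]
    linarith

/-- Applied at a cumulant of degree `d + 1` whose weighted size is maximal, the previous estimate
bounds that maximum. -/
theorem abs_coeff_scaledCumulant_le_of_lower (h : LoopEquations θ a b n Z) (hθ : 0 < θ)
    (ha : 0 ≤ a) (hb : 0 ≤ b) {d : ℕ} (hn : (d : ℝ) + 2 ≤ n) {R : ℝ} (hR : 1 ≤ R)
    (hRθ : 4 * d ≤ R * θ) (hRn : 4 * d * R ≤ n ^ 2) {C : ℝ} (hC : 0 ≤ C)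
    (hlow : ∀ x t, x + t.sum ≤ d → |coeff t (scaledCumulant n Z x)| ≤ C)
    {k : ℕ} {s : Multiset ℕ} (hs : 0 ∉ s) (hks : k + s.sum = d) :
    |coeff s (scaledCumulant n Z (k + 1))| ≤
      2 * ((d + 1) * C + (2 * d + 1) * (C * C * 2 ^ d) + d * C / θ + 2 * C) * R ^ d := by
  set A := (d + 1) * C + (2 * d + 1) * (C * C * 2 ^ d) + d * C / θ + 2 * C
  set u := scaledCumulant n Z
  have hn0 : n ≠ 0 := by linarith [d.cast_nonneg (α := ℝ)]
  let I : Set (ℕ × Multiset ℕ) := {p | p.1 + p.2.sum = d ∧ 0 ∉ p.2}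
  let f : ℕ × Multiset ℕ → ℝ := fun p => |coeff p.2 (u (p.1 + 1))| / R ^ p.2.card
  obtain ⟨q, ⟨hqd, hq0⟩, hmax⟩ := I.exists_max_image f (finite_add_sum_eq d) ⟨(k, s), hks, hs⟩
  have htop : ∀ x t, x + t.sum = d + 1 → |coeff t (u x)| ≤ f q * R ^ t.card := by
    intro x t hxt
    rcases h.coeff_scaledCumulant_eq_zero_or hn0 hxt with h0 | ⟨y, rfl, hyt, ht⟩
    · rw [h0, abs_zero]
      positivity
    · rw [← div_le_iff₀ (by positivity)]
      exact hmax (y, t) ⟨hyt, ht⟩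
  have hq : f q ≤ 2 * A := by
    have hhalf := h.abs_coeff_scaledCumulant_le_add_half hθ ha hb hn hR hRθ hRn hC
      (by positivity : 0 ≤ f q) hlow htop hq0 hqd
    have hfq : f q * R ^ q.2.card = |coeff q.2 (u (q.1 + 1))| :=
      div_mul_cancel₀ _ (by positivity)
    have hR1 : 1 ≤ R ^ q.2.card := one_le_pow₀ hR
    nlinarith [show 0 ≤ f q by positivity]
  refine (htop (k + 1) s (by omega)).trans ?_
  have hcard : s.card ≤ d := (card_le_sum_of_zero_notMem hs).trans (by omega)
  gcongr

end LoopEquations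

theorem exists_forall_abs_coeff_scaledCumulant_le {θ : ℝ} (hθ : 0 < θ) (d : ℕ) :
    ∃ C n₀ : ℝ, ∀ n ≥ n₀, ∀ a ≥ 0, ∀ b ≥ 0, ∀ Z, LoopEquations θ a b n Z →
      ∀ x s, x + s.sum ≤ d → |coeff s (scaledCumulant n Z x)| ≤ C := by
  induction d with
  | zero =>
    refine ⟨1, 1, fun n hn a _ b _ Z h x s hxs => ?_⟩
    obtain rfl : x = 0 := by omega
    rw [h.scaledCumulant_zero (by linarith), coeff_one]
    split_ifs <;> simp
  | succ d ih =>
    obtain ⟨C, n₀, hC⟩ := ih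
    set R := 4 * d / θ + 1 with hR
    set A := 2 * ((d + 1) * |C| + (2 * d + 1) * (|C| * |C| * 2 ^ d) + d * |C| / θ + 2 * |C|)
    refine ⟨max |C| (A * R ^ d), max n₀ (d + 2 + 4 * d * R), fun n hn a ha b hb Z h x s hxs => ?_⟩
    have hR1 : 1 ≤ R := le_add_of_nonneg_left (by positivity)
    have hnd : d + 2 + 4 * d * R ≤ n := (le_max_right _ _).trans hn
    have hdR : 0 ≤ 4 * d * R := by positivity
    have hlow : ∀ x t, x + t.sum ≤ d → |coeff t (scaledCumulant n Z x)| ≤ |C| := fun x t hxt =>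
      (hC n ((le_max_left _ _).trans hn) a ha b hb Z h x t hxt).trans (le_abs_self C)
    rcases Nat.le_succ_iff.1 hxs with hxs | hxs
    · exact (hlow x s hxs).trans (le_max_left _ _)
    rcases h.coeff_scaledCumulant_eq_zero_or (by linarith [d.cast_nonneg (α := ℝ)]) hxs with
      h0 | ⟨k, rfl, hks, hs⟩
    · rw [h0, abs_zero]
      positivity
    · refine (h.abs_coeff_scaledCumulant_le_of_lower hθ ha hb (by linarith) hR1 ?_ ?_
        (abs_nonneg C) hlow hs hks).trans (le_max_right _ _)
      · rw [hR]
        field_simp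
        linarith
      · nlinarith [d.cast_nonneg (α := ℝ)]

end LoopEquations

end ExpSeries

section PartitionCumulant

variable {ι : Type*} [DecidableEq ι] {R : Type*} [CommRing R]

/-- The coefficient of a product over `d` blocks in the partition formula for joint cumulants. -/
def blockCoeff (R : Type*) [CommRing R] (d : ℕ) : R :=
  (-1) ^ (d - 1) * ((d - 1).factorial : R)

theorem blockCoeff_add_nsmul {d : ℕ} (hd : d ≠ 0) :
    blockCoeff R d + (d - 1) • blockCoeff R (d - 1) = if d = 1 then 1 else 0 := by
  obtain _ | _ | d := d
  · exact absurd rfl hd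
  · simp [blockCoeff]
  · rw [if_neg (by omega)]
    simp only [blockCoeff, Nat.add_sub_cancel, Nat.factorial_succ, nsmul_eq_mul, pow_succ]
    push_cast
    ring

/-- The joint cumulant, expressed by the partition formula through the joint moments `m T` of the
subfamilies indexed by the subsets `T` of `S`. -/
def partitionCumulant (m : Finset ι → R) (S : Finset ι) : R :=
  ∑ π : Finpartition S, blockCoeff R π.parts.card * ∏ T ∈ π.parts, m T

section Insert

variable {x : ι} {S : Finset ι}

theorem insert_ssubset_insert_of_notMem (hx : x ∉ S) {T : Finset ι} (hT : T ⊂ S) :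
    insert x T ⊂ insert x S := by
  refine (Finset.insert_subset_insert x hT.1).ssubset_of_not_subset fun h => hT.2 fun y hy => ?_
  exact Finset.mem_of_mem_insert_of_ne (h (Finset.mem_insert_of_mem hy))
    (ne_of_mem_of_not_mem hy hx)

/-- The partition of `insert x S` obtained from a partition of `insert x T`, where `T ⊂ S`, by
adding the part `S \ T`. -/
def addSdiffPart (hx : x ∉ S) {T : Finset ι} (hT : T ⊂ S) (π : Finpartition (insert x T)) :
    Finpartition (insert x S) :=
  π.extendOfLE (insert_ssubset_insert_of_notMem hx hT).le

theorem parts_addSdiffPart (hx : x ∉ S) {T : Finset ι} (hT : T ⊂ S)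
    (π : Finpartition (insert x T)) : (addSdiffPart hx hT π).parts = insert (S \ T) π.parts := by
  rw [addSdiffPart, π.parts_extendOfLE_of_lt (insert_ssubset_insert_of_notMem hx hT),
    Finset.insert_sdiff_insert, Finset.sdiff_insert_of_notMem hx]

theorem sdiff_notMem_parts_of_ssubset (hx : x ∉ S) {T : Finset ι} (hT : T ⊂ S)
    (π : Finpartition (insert x T)) : S \ T ∉ π.parts := by
  intro hmem
  obtain ⟨y, hy⟩ := Finset.sdiff_nonempty.2 hT.2
  rw [Finset.mem_sdiff] at hy
  rcases Finset.mem_insert.1 (π.subset hmem (Finset.mem_sdiff.2 hy)) with rfl | hyT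
  · exact hx hy.1
  · exact hy.2 hyT

theorem addSdiffPart_injective (hx : x ∉ S) {T : Finset ι} (hT : T ⊂ S) :
    Function.Injective (addSdiffPart hx hT) := by
  intro π π' h
  have := congrArg (Finset.erase · (S \ T)) (congrArg Finpartition.parts h)
  simp only [parts_addSdiffPart,
    Finset.erase_insert (sdiff_notMem_parts_of_ssubset hx hT _)] at this
  exact Finpartition.ext this

theorem sup_erase_parts {U : Finset ι} (π : Finpartition S) (hU : U ∈ π.parts) :
    (π.parts.erase U).sup id = S \ U := by
  ext y
  simp only [Finset.mem_sup, Finset.mem_erase, id, Finset.mem_sdiff]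
  constructor
  · rintro ⟨V, ⟨hVU, hV⟩, hy⟩
    exact ⟨π.subset hV hy, fun hyU => hVU (π.eq_of_mem_parts hV hU hy hyU)⟩
  · rintro ⟨hyS, hyU⟩
    obtain ⟨V, hV, hy⟩ := π.exists_mem hyS
    exact ⟨V, ⟨fun h => hyU (h ▸ hy), hV⟩, hy⟩

theorem exists_addSdiffPart_eq (hx : x ∉ S) (π : Finpartition (insert x S)) {U : Finset ι}
    (hU : U ∈ π.parts) (hxU : x ∉ U) :
    ∃ T, ∃ hT : T ⊂ S, S \ T = U ∧ ∃ π', addSdiffPart hx hT π' = π := by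
  have hUS : U ⊆ S := (Finset.subset_insert_iff_of_notMem hxU).1 (π.subset hU)
  have hsup : (π.parts.erase U).sup id = insert x (S \ U) := by
    rw [sup_erase_parts π hU, Finset.insert_sdiff_of_notMem _ hxU]
  refine ⟨S \ U, Finset.sdiff_ssubset hUS (π.nonempty_of_mem_parts hU),
    Finset.sdiff_sdiff_eq_self hUS, π.ofSubset (Finset.erase_subset U _) hsup,
    Finpartition.ext ?_⟩
  rw [parts_addSdiffPart, Finset.sdiff_sdiff_eq_self hUS, Finpartition.ofSubset_parts,
    Finset.insert_erase hU]

/-- A partition of `insert x S` with a marked part not containing `x` is the same as a partition of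
`insert x T` for some `T ⊂ S`, the marked part being `S \ T`. -/
theorem sum_ssubsets_sum_finpartition_insert {A : Type*} [AddCommMonoid A]
    (hx : x ∉ S) (f : Finset (Finset ι) → A) :
    ∑ T ∈ S.ssubsets, ∑ π : Finpartition (insert x T), f (insert (S \ T) π.parts) =
      ∑ π : Finpartition (insert x S), (π.parts.card - 1) • f π.parts := by
  have hmarked (π : Finpartition (insert x S)) : (π.parts.card - 1) • f π.parts =
      ∑ _U ∈ π.parts.erase (π.part x), f π.parts := by
    rw [Finset.sum_const, Finset.card_erase_of_mem (π.part_mem.2 (S.mem_insert_self x))]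
  have hssub {p : Σ T : Finset ι, Finpartition (insert x T)}
      (hp : p ∈ S.ssubsets.sigma fun _ => Finset.univ) : p.1 ⊂ S :=
    Finset.mem_ssubsets.1 (Finset.mem_sigma.1 hp).1
  simp_rw [hmarked, Finset.sum_sigma']
  refine Finset.sum_bij (fun p hp => ⟨addSdiffPart hx (hssub hp) p.2, S \ p.1⟩) ?_ ?_ ?_ ?_
  · rintro ⟨T, π⟩ hp
    simp only [Finset.mem_sigma, Finset.mem_univ, true_and, Finset.mem_erase, parts_addSdiffPart]
    refine ⟨fun h => hx ?_, Finset.mem_insert_self _ _⟩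
    have := (addSdiffPart hx (hssub hp) π).mem_part_self.2 (S.mem_insert_self x)
    exact (Finset.mem_sdiff.1 (h ▸ this)).1
  · rintro ⟨T, π⟩ hp ⟨T', π'⟩ hp' heq
    obtain ⟨hπ, hsdiff⟩ := Sigma.mk.inj heq
    have hT : T ⊂ S := hssub hp
    have hT' : T' ⊂ S := hssub hp'
    obtain rfl : T = T' := by
      rw [← Finset.sdiff_sdiff_eq_self hT.1, eq_of_heq hsdiff, Finset.sdiff_sdiff_eq_self hT'.1]
    exact congrArg _ (addSdiffPart_injective hx hT hπ)
  · rintro ⟨π, U⟩ hp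
    obtain ⟨hUx, hU⟩ := Finset.mem_erase.1 (Finset.mem_sigma.1 hp).2
    obtain ⟨T, hT, rfl, π', rfl⟩ :=
      exists_addSdiffPart_eq hx π hU fun h => hUx (π.part_eq_of_mem hU h).symm
    exact ⟨⟨T, π'⟩, Finset.mem_sigma.2 ⟨Finset.mem_ssubsets.2 hT, Finset.mem_univ _⟩, rfl⟩
  · rintro ⟨T, π⟩ hp
    rw [parts_addSdiffPart]

theorem sum_finpartition_card_parts_eq_one (hS : S.Nonempty) (f : Finset (Finset ι) → R) :
    ∑ π : Finpartition S, (if π.parts.card = 1 then f π.parts else 0) = f {S} := by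
  rw [Finset.sum_eq_single (Finpartition.indiscrete hS.ne_empty)]
  · simp
  · intro π _ hπ
    refine if_neg fun hcard => hπ (Finpartition.ext ?_)
    obtain ⟨T, hT⟩ := Finset.card_eq_one.1 hcard
    have := π.sup_parts
    rw [hT, Finset.sup_singleton, id] at this
    rw [hT, this, Finpartition.indiscrete_parts]
  · simp

theorem partitionCumulant_recursion {m : Finset ι → R} (hm : m ∅ = 1) (hx : x ∉ S) :
    ∑ T ∈ S.powerset, partitionCumulant m (insert x T) * m (S \ T) = m (insert x S) := by
  have hproper : ∑ T ∈ S.ssubsets, partitionCumulant m (insert x T) * m (S \ T) =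
      ∑ π : Finpartition (insert x S),
        (π.parts.card - 1) • (blockCoeff R (π.parts.card - 1) * ∏ T ∈ π.parts, m T) := by
    rw [← sum_ssubsets_sum_finpartition_insert hx fun P =>
      blockCoeff R (P.card - 1) * ∏ T ∈ P, m T]
    refine Finset.sum_congr rfl fun T hT => ?_
    rw [partitionCumulant, Finset.sum_mul]
    refine Finset.sum_congr rfl fun π _ => ?_
    have hnotMem := sdiff_notMem_parts_of_ssubset hx (Finset.mem_ssubsets.1 hT) π
    rw [Finset.card_insert_of_notMem hnotMem, Finset.prod_insert hnotMem, Nat.add_sub_cancel]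
    ring
  rw [← Finset.sum_erase_add _ _ (Finset.mem_powerset_self S), Finset.sdiff_self, hm, mul_one,
    ← Finset.ssubsets, hproper, partitionCumulant, ← Finset.sum_add_distrib,
    ← Finset.prod_singleton m (insert x S),
    ← sum_finpartition_card_parts_eq_one (S.insert_nonempty x) fun P => ∏ T ∈ P, m T]
  refine Finset.sum_congr rfl fun π _ => ?_
  have hd : π.parts.card ≠ 0 :=
    Finset.card_ne_zero.2 (π.parts_nonempty (S.insert_nonempty x).ne_empty)
  rw [← smul_mul_assoc, ← add_mul, add_comm, blockCoeff_add_nsmul hd, ite_mul, one_mul, zero_mul]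

end Insert

end PartitionCumulant

namespace ExpSeries

variable {X ι R : Type*} [CommRing R] [DecidableEq ι]

theorem coeff_map_val_mul (f g : ExpSeries X R) (k : ι → X) (S : Finset ι) :
    coeff (S.val.map k) (f * g) =
      ∑ T ∈ S.powerset, coeff (T.val.map k) f * coeff ((S \ T).val.map k) g := by
  induction S using Finset.induction generalizing f g with
  | empty => simp
  | insert x S hx ih =>
    have hcons {T : Finset ι} (hT : T ⊆ S) (h : ExpSeries X R) :
        coeff ((insert x T).val.map k) h = coeff (T.val.map k) (D (k x) h) := by
      rw [Finset.insert_val_of_notMem fun hxT => hx (hT hxT), Multiset.map_cons, coeff_D]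
    rw [hcons subset_rfl, D_mul, map_add, ih, ih, Finset.sum_powerset_insert hx, add_comm]
    congr 1 <;> refine Finset.sum_congr rfl fun T hT => ?_ <;> rw [Finset.mem_powerset] at hT
    · rw [Finset.insert_sdiff_of_notMem _ fun hxT => hx (hT hxT), hcons Finset.sdiff_subset]
    · rw [Finset.insert_sdiff_insert, Finset.sdiff_insert_of_notMem hx, hcons hT]

theorem coeff_logDeriv_eq_partitionCumulant {Z : ExpSeries X R} (hZ : coeff 0 Z = 1) (k : ι → X)
    {x : ι} {S : Finset ι} (hx : x ∉ S) :
    coeff (S.val.map k) (logDeriv Z (k x)) =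
      partitionCumulant (fun T => coeff (T.val.map k) Z) (insert x S) := by
  induction S using Finset.strongInduction with
  | H S ih =>
    have hlog := coeff_map_val_mul (logDeriv Z (k x)) Z k S
    have hpart := partitionCumulant_recursion (m := fun T => coeff (T.val.map k) Z)
      (by simpa using hZ) hx
    rw [logDeriv_mul_self hZ, coeff_D, ← Multiset.map_cons, ← Finset.insert_val_of_notMem hx,
      ← hpart,
      ← Finset.sum_erase_add _ _ (Finset.mem_powerset_self S),
      ← Finset.sum_erase_add _ _ (Finset.mem_powerset_self S), ← Finset.ssubsets,
      Finset.sdiff_self, Finset.empty_val, Multiset.map_zero, hZ, mul_one, mul_one] at hlog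
    refine (add_left_cancel (hlog.trans ?_)).symm
    congr 1
    refine Finset.sum_congr rfl fun T hT => ?_
    rw [Finset.mem_ssubsets] at hT
    rw [ih T hT fun hxT => hx (hT.1 hxT)]

end ExpSeries

theorem isSetPartition_parts {m : ℕ} (π : Finpartition (Finset.univ : Finset (Fin m))) :
    IsSetPartition π.parts :=
  ⟨fun _ => π.nonempty_of_mem_parts, fun _ hT _ hT' => π.disjoint hT hT',
    fun i => π.exists_mem (Finset.mem_univ i)⟩

theorem exists_finpartition_parts_eq {m : ℕ} {P : Finset (Finset (Fin m))}
    (hP : IsSetPartition P) :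
    ∃ π : Finpartition (Finset.univ : Finset (Fin m)), π.parts = P := by
  refine ⟨Finpartition.ofExistsUnique P (fun _ _ => Finset.subset_univ _) (fun i _ => ?_)
    fun h => (hP.1 ∅ h).ne_empty rfl, rfl⟩
  obtain ⟨T, hT, hi⟩ := hP.2.2 i
  refine ⟨T, ⟨hT, hi⟩, fun T' hT' => ?_⟩
  by_contra hne
  exact Finset.disjoint_left.1 (hP.2.1 T' hT'.1 T hT hne) hT'.2 hi

theorem jointCumulant_ofReal {Ω : Type*} [MeasurableSpace Ω] (μ : Measure Ω) {m : ℕ}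
    (v : Fin m → Ω → ℝ) :
    jointCumulant μ (fun i ω => (v i ω : ℂ)) =
      (partitionCumulant (fun T => ∫ ω, ∏ i ∈ T, v i ω ∂μ) Finset.univ : ℝ) := by
  rw [jointCumulant, partitionCumulant, Complex.ofReal_sum]
  symm
  refine Finset.sum_bij (fun π _ => π.parts)
    (fun π _ => Finset.mem_filter.2 ⟨Finset.mem_univ _, isSetPartition_parts π⟩)
    (fun π _ π' _ => Finpartition.ext) (fun P hP => ?_) fun π _ => ?_
  · obtain ⟨π, hπ⟩ := exists_finpartition_parts_eq (Finset.mem_filter.1 hP).2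
    exact ⟨π, Finset.mem_univ _, hπ⟩
  · simp only [blockCoeff, ← Complex.ofReal_prod, integral_complex_ofReal]
    push_cast
    rfl

namespace Jacobi

open Finset MvPolynomial

section LoopAlgebra

variable {σ : Type*} [Fintype σ] (k : ℕ)

/-- The polynomial vector field `∑ᵢ xᵢ^{k+1} (1 - xᵢ) ∂ᵢ`, tangent to the faces of the cube
`[0,1]^σ`. -/
def cubeField (σ : Type*) (k : ℕ) : Derivation ℝ (MvPolynomial σ ℝ) (MvPolynomial σ ℝ) :=
  mkDerivation ℝ fun i => X i ^ (k + 1) - X i ^ (k + 2)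

theorem cubeField_psum (j : ℕ) :
    cubeField σ k (psum σ ℝ j) = (j : ℝ) • (psum σ ℝ (k + j) - psum σ ℝ (k + 1 + j)) := by
  simp only [psum, map_sum, ← sum_sub_distrib, smul_sum]
  refine sum_congr rfl fun i _ => ?_
  rcases j with _ | j
  · simp
  · rw [Derivation.leibniz_pow, cubeField, mkDerivation_X, smul_eq_mul, Nat.cast_smul_eq_nsmul,
      Nat.add_sub_cancel]
    ring

/-- The logarithmic divergence, along `cubeField σ k`, of the Jacobi weight
`∏_{i<j} |xᵢ - xⱼ|^{2θ} ∏ᵢ xᵢ^{a-1} (1 - xᵢ)^{b-1}`. -/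
def jacobiDrift (σ : Type*) [Fintype σ] (θ a b : ℝ) (k : ℕ) : MvPolynomial σ ℝ :=
  θ • (∑ l ∈ range (k + 1), psum σ ℝ l * psum σ ℝ (k - l) -
      ∑ l ∈ range (k + 2), psum σ ℝ l * psum σ ℝ (k + 1 - l)) +
    (a - 1 + (1 - θ) * (k + 1)) • psum σ ℝ k - (a + b - 2 + (1 - θ) * (k + 2)) • psum σ ℝ (k + 1)

/-- The series of the values of a linear functional at products of power sums. -/
def psumSeries (E : MvPolynomial σ ℝ →ₗ[ℝ] ℝ) : ExpSeries ℕ ℝ :=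
  ExpSeries.mk fun s => E (s.map (psum σ ℝ)).prod

variable (E : MvPolynomial σ ℝ →ₗ[ℝ] ℝ)

theorem coeff_psumSeries (s : Multiset ℕ) :
    ExpSeries.coeff s (psumSeries E) = E (s.map (psum σ ℝ)).prod := rfl

theorem coeff_D_psumSeries (x : ℕ) (s : Multiset ℕ) :
    ExpSeries.coeff s (ExpSeries.D x (psumSeries E)) =
      E (psum σ ℝ x * (s.map (psum σ ℝ)).prod) := by
  rw [ExpSeries.coeff_D, coeff_psumSeries, Multiset.map_cons, Multiset.prod_cons]

theorem coeff_D_D_psumSeries (x y : ℕ) (s : Multiset ℕ) :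
    ExpSeries.coeff s (ExpSeries.D x (ExpSeries.D y (psumSeries E))) =
      E (psum σ ℝ x * psum σ ℝ y * (s.map (psum σ ℝ)).prod) := by
  rw [ExpSeries.coeff_D, coeff_D_psumSeries, Multiset.map_cons, Multiset.prod_cons]
  congr 1
  ring

theorem cubeField_prod_psum (s : Multiset ℕ) :
    cubeField σ k (s.map (psum σ ℝ)).prod =
      (s.map fun x => cubeField σ k (psum σ ℝ x) * ((s.erase x).map (psum σ ℝ)).prod).sum := by
  induction s using Multiset.induction with
  | empty => simp
  | cons y s ih =>
    have hs : ∀ x ∈ s, cubeField σ k (psum σ ℝ x) * (((y ::ₘ s).erase x).map (psum σ ℝ)).prod =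
        psum σ ℝ y * (cubeField σ k (psum σ ℝ x) * ((s.erase x).map (psum σ ℝ)).prod) := by
      intro x hx
      rw [Multiset.erase_cons_tail_of_mem hx, Multiset.map_cons, Multiset.prod_cons]
      ring
    rw [Multiset.map_cons, Multiset.prod_cons, Derivation.leibniz, ih, Multiset.map_cons,
      Multiset.sum_cons, Multiset.erase_cons_head, Multiset.map_congr rfl hs,
      Multiset.sum_map_mul_left, smul_eq_mul, smul_eq_mul]
    ring

theorem loopEquations_psumSeries {θ a b : ℝ} (hE : E 1 = 1)
    (hloop : ∀ k p, E (cubeField σ k p + p * jacobiDrift σ θ a b k) = 0) :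
    ExpSeries.LoopEquations θ a b (Fintype.card σ) (psumSeries E) where
  coeff_zero := by simpa [coeff_psumSeries] using hE
  D_zero := by
    ext s
    rw [coeff_D_psumSeries, psum_zero, map_smul, coeff_psumSeries, ← map_smul, smul_eq_C_mul,
      map_natCast]
  loop k := by
    ext s
    have h := hloop k (s.map (psum σ ℝ)).prod
    have hfield : E (cubeField σ k (s.map (psum σ ℝ)).prod) = ExpSeries.coeff s
        (ExpSeries.insertionSum fun x : ℕ => (x : ℝ) •
          (ExpSeries.D (k + x) (psumSeries E) - ExpSeries.D (k + 1 + x) (psumSeries E))) := by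
      rw [cubeField_prod_psum, map_multiset_sum, Multiset.map_map, ExpSeries.coeff_insertionSum]
      refine congrArg Multiset.sum (Multiset.map_congr rfl fun x _ => ?_)
      simp only [Function.comp_apply, cubeField_psum, smul_mul_assoc, sub_mul, map_smul, map_sub,
        coeff_D_psumSeries]
    rw [map_add, hfield, mul_comm, jacobiDrift] at h
    simp only [map_add, map_sub, map_smul, map_sum, map_zero, coeff_D_psumSeries,
      coeff_D_D_psumSeries]
    simp only [add_mul, sub_mul, smul_mul_assoc, sum_mul, map_add, map_sub, map_smul, map_sum,
      smul_eq_mul] at h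
    simp only [smul_eq_mul]
    linear_combination h

end LoopAlgebra

section SelbergWeight

/-- The Selberg weight on `[0,1]^N`; `jacobiDensity` is the case `a = θ α`,
`b = θ (M - N) + θ`. -/
def selbergWeight (θ a b : ℝ) {N : ℕ} (x : Fin N → ℝ) : ℝ :=
  (∏ p : Fin N × Fin N with p.1 < p.2, |x p.1 - x p.2| ^ (2 * θ)) *
    ∏ i, (x i ^ (a - 1) * (1 - x i) ^ (b - 1))

variable {θ a b : ℝ} {N : ℕ} {x : Fin N → ℝ}

theorem jacobiDensity_eq_selbergWeight (θ α : ℝ) (M N : ℕ) :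
    jacobiDensity θ α M N = selbergWeight θ (θ * α) (θ * ((M : ℝ) - N) + θ) := rfl

theorem mem_Icc_apply (hx : x ∈ Set.Icc 0 1) (i : Fin N) : x i ∈ Set.Icc (0 : ℝ) 1 :=
  ⟨hx.1 i, hx.2 i⟩

@[fun_prop]
theorem measurable_selbergWeight : Measurable (selbergWeight θ a b (N := N)) := by
  unfold selbergWeight
  fun_prop

theorem prod_rpow_mul_one_sub_rpow_nonneg (hx : x ∈ Set.Icc 0 1) :
    0 ≤ ∏ i, (x i ^ (a - 1) * (1 - x i) ^ (b - 1)) :=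
  prod_nonneg fun i _ => mul_nonneg (Real.rpow_nonneg (hx.1 i) _)
    (Real.rpow_nonneg (sub_nonneg.2 (hx.2 i)) _)

theorem selbergWeight_nonneg (hx : x ∈ Set.Icc 0 1) : 0 ≤ selbergWeight θ a b x :=
  mul_nonneg (prod_nonneg fun _ _ => Real.rpow_nonneg (abs_nonneg _) _)
    (prod_rpow_mul_one_sub_rpow_nonneg hx)

theorem integrableOn_rpow_mul_one_sub_rpow (ha : 0 < a) (hb : 0 < b) :
    IntegrableOn (fun t : ℝ => t ^ (a - 1) * (1 - t) ^ (b - 1)) (Set.Icc 0 1) := by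
  have hbeta := Complex.betaIntegral_convergent (u := a) (v := b) (by simpa) (by simpa)
  rw [intervalIntegrable_iff_integrableOn_Ioo_of_le zero_le_one] at hbeta
  rw [integrableOn_Icc_iff_integrableOn_Ioo]
  refine IntegrableOn.congr_fun hbeta.norm (fun t ht => ?_) measurableSet_Ioo
  have hcast : (1 - t : ℂ) = (1 - t : ℝ) := by push_cast; rfl
  simp only [norm_mul]
  rw [hcast, Complex.norm_cpow_eq_rpow_re_of_pos ht.1,
    Complex.norm_cpow_eq_rpow_re_of_pos (sub_pos.2 ht.2)]
  simp

theorem prod_abs_sub_rpow_le_one (hθ : 0 ≤ θ) (hx : x ∈ Set.Icc 0 1) :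
    ∏ p : Fin N × Fin N with p.1 < p.2, |x p.1 - x p.2| ^ (2 * θ) ≤ 1 :=
  prod_le_one (fun _ _ => Real.rpow_nonneg (abs_nonneg _) _) fun p _ =>
    Real.rpow_le_one (abs_nonneg _)
      (by simpa using abs_sub_le_of_le_of_le (hx.1 p.1) (hx.2 p.1) (hx.1 p.2) (hx.2 p.2))
      (by positivity)

theorem integrableOn_selbergWeight (hθ : 0 ≤ θ) (ha : 0 < a) (hb : 0 < b) :
    IntegrableOn (selbergWeight θ a b) (Set.Icc (0 : Fin N → ℝ) 1) := by
  have hprod : IntegrableOn (fun x : Fin N → ℝ => ∏ i, (x i ^ (a - 1) * (1 - x i) ^ (b - 1)))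
      (Set.Icc 0 1) := by
    rw [IntegrableOn, ← Set.pi_univ_Icc, volume_pi, Measure.restrict_pi_pi]
    exact Integrable.fintype_prod fun _ => integrableOn_rpow_mul_one_sub_rpow ha hb
  refine hprod.mono' measurable_selbergWeight.aestronglyMeasurable ?_
  filter_upwards [ae_restrict_mem measurableSet_Icc] with x hx
  rw [Real.norm_of_nonneg (selbergWeight_nonneg hx)]
  exact mul_le_of_le_one_left (prod_rpow_mul_one_sub_rpow_nonneg hx)
    (prod_abs_sub_rpow_le_one hθ hx)

theorem selbergWeight_pos (hx : ∀ i, x i ∈ Set.Ioo 0 1) (hinj : x.Injective) :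
    0 < selbergWeight θ a b x := by
  refine mul_pos (prod_pos fun p hp => Real.rpow_pos_of_pos (abs_pos.2 (sub_ne_zero.2 ?_)) _)
    (prod_pos fun i _ => mul_pos (Real.rpow_pos_of_pos (hx i).1 _)
      (Real.rpow_pos_of_pos (sub_pos.2 (hx i).2) _))
  exact hinj.ne (mem_filter.1 hp).2.ne

theorem continuousAt_selbergWeight (hx : ∀ i, x i ∈ Set.Ioo 0 1) (hinj : x.Injective) :
    ContinuousAt (selbergWeight θ a b) x := by
  unfold selbergWeight
  refine ContinuousAt.mul (tendsto_finsetProd _ fun p hp => ?_)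
    (tendsto_finsetProd _ fun i _ => ContinuousAt.mul ?_ ?_)
  · have hne : x p.1 ≠ x p.2 := hinj.ne (mem_filter.1 hp).2.ne
    exact ContinuousAt.rpow_const (by fun_prop) (Or.inl (abs_ne_zero.2 (sub_ne_zero.2 hne)))
  · exact (continuous_apply i).continuousAt.rpow_const (Or.inl (hx i).1.ne')
  · exact (continuous_const.sub (continuous_apply i)).continuousAt.rpow_const
      (Or.inl (sub_pos.2 (hx i).2).ne')

theorem exists_injective_mem_Ioo (N : ℕ) :
    ∃ x : Fin N → ℝ, (∀ i, x i ∈ Set.Ioo 0 1) ∧ x.Injective := by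
  obtain ⟨f⟩ : Nonempty (Fin N ↪ Set.Ioo (0 : ℝ) 1) :=
    have := (Set.Ioo_infinite (zero_lt_one' ℝ)).to_subtype
    ⟨Function.Embedding.trans Fin.valEmbedding (Infinite.natEmbedding _)⟩
  exact ⟨fun i => f i, fun i => (f i).2, Subtype.val_injective.comp f.injective⟩

theorem frequently_selbergWeight_pos (θ a b : ℝ) (N : ℕ) :
    ∃ᵐ x ∂volume.restrict (Set.Icc (0 : Fin N → ℝ) 1), 0 < selbergWeight θ a b x := by
  obtain ⟨x, hx, hinj⟩ := exists_injective_mem_Ioo N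
  have hpos : ∀ᶠ y in nhds x, 0 < selbergWeight θ a b y :=
    (continuousAt_selbergWeight hx hinj).eventually_const_lt (selbergWeight_pos hx hinj)
  have hIcc : Set.Icc (0 : Fin N → ℝ) 1 ∈ nhds x := by
    rw [← Set.pi_univ_Icc]
    exact set_pi_mem_nhds Set.finite_univ fun i _ => Icc_mem_nhds (hx i).1 (hx i).2
  intro hae
  rw [ae_restrict_iff' measurableSet_Icc] at hae
  obtain ⟨y, hy, hy_pos, hyI⟩ := ((mem_closure_iff_frequently.1
    (Measure.dense_of_ae hae x)).and_eventually (hpos.and hIcc)).exists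
  exact hy hyI hy_pos

end SelbergWeight

section Ensemble

variable {θ α : ℝ} {M N : ℕ}

theorem jacobiMeasureRaw_eq_withDensity : jacobiMeasureRaw θ α M N =
    (volume.restrict (Set.Icc 0 1)).withDensity
      fun x => ENNReal.ofReal (jacobiDensity θ α M N x) := by
  rw [jacobiMeasureRaw, Set.pi_univ_Icc]
  rfl

theorem ae_mem_Icc_jacobiEnsemble : ∀ᵐ x ∂jacobiEnsemble θ α M N, x ∈ Set.Icc 0 1 := by
  rw [jacobiEnsemble, jacobiMeasureRaw_eq_withDensity]
  exact Measure.ae_smul_measure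
    ((withDensity_absolutelyContinuous _ _).ae_le (ae_restrict_mem measurableSet_Icc)) _

theorem mul_sub_add_pos (hθ : 0 < θ) (hM : N ≤ M) : 0 < θ * ((M : ℝ) - N) + θ :=
  add_pos_of_nonneg_of_pos (mul_nonneg hθ.le (sub_nonneg.2 (Nat.cast_le.2 hM))) hθ

theorem isProbabilityMeasure_jacobiEnsemble (hθ : 0 < θ) (hα : 0 < α) (hM : N ≤ M) :
    IsProbabilityMeasure (jacobiEnsemble θ α M N) := by
  have hfin : IsFiniteMeasure (jacobiMeasureRaw θ α M N) := by
    rw [jacobiMeasureRaw_eq_withDensity, jacobiDensity_eq_selbergWeight]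
    exact isFiniteMeasure_withDensity_ofReal (integrableOn_selbergWeight hθ.le (mul_pos hθ hα)
      (mul_sub_add_pos hθ hM)).2
  have hne : NeZero (jacobiMeasureRaw θ α M N) := by
    refine ⟨fun h => ?_⟩
    rw [jacobiMeasureRaw_eq_withDensity, jacobiDensity_eq_selbergWeight,
      withDensity_eq_zero_iff (by fun_prop)] at h
    exact frequently_selbergWeight_pos _ _ _ _
      (h.mono fun x hx => (ENNReal.ofReal_eq_zero.1 hx).not_gt)
  exact isProbabilityMeasureSMul

theorem integrable_jacobiEnsemble [IsFiniteMeasure (jacobiEnsemble θ α M N)]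
    {f : (Fin N → ℝ) → ℝ} (hf : Continuous f) : Integrable f (jacobiEnsemble θ α M N) := by
  have h := hf.continuousOn.integrableOn_compact (μ := jacobiEnsemble θ α M N)
    (isCompact_Icc (a := 0) (b := 1))
  rwa [IntegrableOn, Measure.restrict_eq_self_of_ae_mem ae_mem_Icc_jacobiEnsemble] at h

theorem integral_jacobiEnsemble (f : (Fin N → ℝ) → ℝ) :
    ∫ x, f x ∂jacobiEnsemble θ α M N = (jacobiMeasureRaw θ α M N Set.univ)⁻¹.toReal *
      ∫ x in Set.Icc 0 1, f x * jacobiDensity θ α M N x := by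
  have hmeas : Measurable (jacobiDensity θ α M N) := measurable_selbergWeight
  rw [jacobiEnsemble, integral_smul_measure, smul_eq_mul]
  congr 1
  rw [jacobiMeasureRaw_eq_withDensity, integral_withDensity_eq_integral_toReal_smul
    hmeas.ennreal_ofReal (Filter.Eventually.of_forall fun _ => ENNReal.ofReal_lt_top)]
  refine setIntegral_congr_fun measurableSet_Icc fun x hx => ?_
  have hnonneg : 0 ≤ jacobiDensity θ α M N x := selbergWeight_nonneg hx
  simp only [ENNReal.toReal_ofReal hnonneg, smul_eq_mul, mul_comm]

end Ensemble

section FieldStep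

variable {k : ℕ} {s t u : ℝ}

/-- The divided difference at `t`, `u` of `t^{k+1} (1 - t)`, the coefficient of `cubeField`. -/
def fieldSlope (k : ℕ) (t u : ℝ) : ℝ :=
  ∑ l ∈ range (k + 1), t ^ l * u ^ (k - l) - ∑ l ∈ range (k + 2), t ^ l * u ^ (k + 1 - l)

theorem fieldSlope_mul_sub (k : ℕ) (t u : ℝ) :
    fieldSlope k t u * (t - u) = (t ^ (k + 1) - t ^ (k + 2)) - (u ^ (k + 1) - u ^ (k + 2)) := by
  have h₁ := (Commute.all t u).geom_sum₂_mul (k + 1)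
  have h₂ := (Commute.all t u).geom_sum₂_mul (k + 2)
  simp only [Nat.add_sub_cancel, Nat.add_succ_sub_one] at h₁ h₂
  rw [fieldSlope, sub_mul, h₁, h₂]
  ring

theorem fieldSlope_comm (k : ℕ) (t u : ℝ) : fieldSlope k t u = fieldSlope k u t := by
  have h₁ := (Commute.all t u).geom_sum₂_comm (k + 1)
  have h₂ := (Commute.all t u).geom_sum₂_comm (k + 2)
  simp only [Nat.add_sub_cancel, Nat.add_succ_sub_one] at h₁ h₂
  rw [fieldSlope, fieldSlope, h₁, h₂]

theorem fieldSlope_self (k : ℕ) (t : ℝ) :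
    fieldSlope k t t = (k + 1) * t ^ k - (k + 2) * t ^ (k + 1) := by
  have hsum (n : ℕ) : ∑ l ∈ range (n + 1), t ^ l * t ^ (n - l) = (n + 1) * t ^ n := by
    rw [sum_congr rfl fun l hl => pow_mul_pow_sub t (mem_range_succ_iff.1 hl)]
    simp
  rw [fieldSlope, hsum, hsum]
  push_cast
  ring

theorem fieldSlope_zero_left (k : ℕ) (t : ℝ) : fieldSlope k 0 t = t ^ k - t ^ (k + 1) := by
  simp [fieldSlope, sum_range_succ']

theorem fieldSlope_one_left (k : ℕ) (t : ℝ) : fieldSlope k 1 t = -t ^ (k + 1) := by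
  rw [fieldSlope, sum_range_succ' _ (k + 1)]
  simp

theorem abs_fieldSlope_le (ht : t ∈ Set.Icc 0 1) (hu : u ∈ Set.Icc 0 1) :
    |fieldSlope k t u| ≤ k + 2 := by
  have hsum (n : ℕ) :
      ∑ l ∈ range (n + 1), t ^ l * u ^ (n - l) ∈ Set.Icc (0 : ℝ) (n + 1) := by
    refine ⟨sum_nonneg fun l _ => mul_nonneg (pow_nonneg ht.1 _) (pow_nonneg hu.1 _), ?_⟩
    refine (sum_le_card_nsmul _ _ 1 fun l _ => ?_).trans (by simp)
    exact mul_le_one₀ (pow_le_one₀ ht.1 ht.2) (pow_nonneg hu.1 _) (pow_le_one₀ hu.1 hu.2)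
  have h₁ := hsum k
  have h₂ := hsum (k + 1)
  push_cast at h₂
  rw [fieldSlope, abs_le]
  constructor <;> linarith [h₁.1, h₁.2, h₂.1, h₂.2]

theorem one_add_mul_fieldSlope_pos (hs : |s| * (k + 2) < 1) (ht : t ∈ Set.Icc 0 1)
    (hu : u ∈ Set.Icc 0 1) : 0 < 1 + s * fieldSlope k t u := by
  have habs : |s * fieldSlope k t u| < 1 := by
    rw [abs_mul]
    exact (mul_le_mul_of_nonneg_left (abs_fieldSlope_le ht hu) (abs_nonneg s)).trans_lt hs
  linarith [(abs_lt.1 habs).1]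

/-- The Euler step of length `s` along one coordinate of `cubeField`. -/
def fieldStep (k : ℕ) (s t : ℝ) : ℝ := t + s * (t ^ (k + 1) - t ^ (k + 2))

@[fun_prop]
theorem contDiff_fieldStep : ContDiff ℝ 1 fun q : ℝ × ℝ => fieldStep k q.1 q.2 := by
  unfold fieldStep
  fun_prop

@[fun_prop]
theorem contDiff_fieldSlope : ContDiff ℝ 1 fun q : ℝ × ℝ => fieldSlope k q.1 q.2 := by
  unfold fieldSlope
  fun_prop

theorem fieldStep_zero (k : ℕ) : fieldStep k 0 = id := by
  ext t
  simp [fieldStep]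

theorem fieldStep_sub_fieldStep (k : ℕ) (s t u : ℝ) :
    fieldStep k s t - fieldStep k s u = (t - u) * (1 + s * fieldSlope k t u) := by
  unfold fieldStep
  linear_combination -s * fieldSlope_mul_sub k t u

theorem fieldStep_eq_mul (k : ℕ) (s t : ℝ) :
    fieldStep k s t = t * (1 + s * fieldSlope k 0 t) := by
  rw [fieldStep, fieldSlope_zero_left]
  ring

theorem one_sub_fieldStep (k : ℕ) (s t : ℝ) :
    1 - fieldStep k s t = (1 - t) * (1 + s * fieldSlope k 1 t) := by
  rw [fieldStep, fieldSlope_one_left]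
  ring

theorem hasDerivAt_fieldStep (k : ℕ) (s t : ℝ) :
    HasDerivAt (fieldStep k s) (1 + s * fieldSlope k t t) t := by
  refine ((hasDerivAt_id t).add
    (((hasDerivAt_pow (k + 1) t).sub (hasDerivAt_pow (k + 2) t)).const_mul s)).congr_deriv ?_
  rw [fieldSlope_self]
  push_cast
  rfl

theorem injOn_fieldStep (hs : |s| * (k + 2) < 1) : Set.InjOn (fieldStep k s) (Set.Icc 0 1) := by
  intro t ht u hu h
  have hsub := fieldStep_sub_fieldStep k s t u
  rw [h, sub_self, zero_eq_mul] at hsub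
  exact sub_eq_zero.1 (hsub.resolve_right (one_add_mul_fieldSlope_pos hs ht hu).ne')

theorem image_fieldStep_Icc (hs : |s| * (k + 2) < 1) :
    fieldStep k s '' Set.Icc 0 1 = Set.Icc 0 1 := by
  refine Set.Subset.antisymm (Set.image_subset_iff.2 fun t ht => ⟨?_, ?_⟩) ?_
  · rw [fieldStep_eq_mul]
    exact mul_nonneg ht.1 (one_add_mul_fieldSlope_pos hs ⟨le_rfl, zero_le_one⟩ ht).le
  · rw [← sub_nonneg, one_sub_fieldStep]
    exact mul_nonneg (sub_nonneg.2 ht.2)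
      (one_add_mul_fieldSlope_pos hs ⟨zero_le_one, le_rfl⟩ ht).le
  · have hcont : Continuous (fieldStep k s) := by unfold fieldStep; fun_prop
    simpa [fieldStep] using intermediate_value_Icc zero_le_one hcont.continuousOn

end FieldStep

section ChangeOfVariables

theorem setIntegral_univ_pi_image {ι : Type*} [Fintype ι] {f f' : ℝ → ℝ} {S : Set ℝ}
    (hS : MeasurableSet S) (hf : ∀ t ∈ S, HasDerivWithinAt f (f' t) S t) (hinj : Set.InjOn f S)
    (g : (ι → ℝ) → ℝ) :
    ∫ x in Set.univ.pi fun _ => f '' S, g x =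
      ∫ x in Set.univ.pi fun _ => S, |∏ i, f' (x i)| * g (f ∘ x) := by
  have hderiv : ∀ x ∈ Set.univ.pi fun _ : ι => S, HasFDerivWithinAt (fun y => f ∘ y)
      (ContinuousLinearMap.pi fun i =>
        (ContinuousLinearMap.toSpanSingleton ℝ (f' (x i))).comp (ContinuousLinearMap.proj i))
      (Set.univ.pi fun _ => S) x := by
    intro x hx
    refine hasFDerivWithinAt_pi.2 fun i => ?_
    exact (hf (x i) (hx i trivial)).hasFDerivWithinAt.comp x
      (ContinuousLinearMap.proj (R := ℝ) (φ := fun _ : ι => ℝ) i).hasFDerivWithinAt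
      fun y hy => hy i trivial
  have hinj_pi : Set.InjOn (fun y : ι → ℝ => f ∘ y) (Set.univ.pi fun _ => S) :=
    fun x hx y hy h => funext fun i => hinj (hx i trivial) (hy i trivial) (congrFun h i)
  have himage : (fun y : ι → ℝ => f ∘ y) '' Set.univ.pi (fun _ => S) =
      Set.univ.pi fun _ => f '' S := Set.piMap_image_univ_pi (fun _ => f) fun _ => S
  rw [← himage, integral_image_eq_integral_abs_det_fderiv_smul volume
    (MeasurableSet.univ_pi fun _ => hS) hderiv hinj_pi]
  simp [ContinuousLinearMap.det_pi]

variable {θ a b s : ℝ} {k N : ℕ}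

/-- The Jacobian determinant of `fieldStep k s` acting on each coordinate, times the ratio of the
values of `selbergWeight θ a b` after and before the step. -/
def stepDensity (θ a b : ℝ) (k : ℕ) (s : ℝ) (x : Fin N → ℝ) : ℝ :=
  (∏ p : Fin N × Fin N with p.1 < p.2, (1 + s * fieldSlope k (x p.1) (x p.2)) ^ (2 * θ)) *
    (∏ i, (1 + s * fieldSlope k 0 (x i)) ^ (a - 1)) *
    (∏ i, (1 + s * fieldSlope k 1 (x i)) ^ (b - 1)) *
    ∏ i, (1 + s * fieldSlope k (x i) (x i))

theorem prod_mul_selbergWeight_comp_fieldStep (hs : |s| * (k + 2) < 1) {x : Fin N → ℝ}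
    (hx : x ∈ Set.Icc 0 1) :
    (∏ i, (1 + s * fieldSlope k (x i) (x i))) * selbergWeight θ a b (fieldStep k s ∘ x) =
      stepDensity θ a b k s x * selbergWeight θ a b x := by
  have hx' := mem_Icc_apply hx
  have hpair (p : Fin N × Fin N) : |fieldStep k s (x p.1) - fieldStep k s (x p.2)| ^ (2 * θ) =
      |x p.1 - x p.2| ^ (2 * θ) * (1 + s * fieldSlope k (x p.1) (x p.2)) ^ (2 * θ) := by
    have hpos := one_add_mul_fieldSlope_pos hs (hx' p.1) (hx' p.2)
    rw [fieldStep_sub_fieldStep, abs_mul, abs_of_pos hpos,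
      Real.mul_rpow (abs_nonneg _) hpos.le]
  have hzero (i : Fin N) : fieldStep k s (x i) ^ (a - 1) =
      x i ^ (a - 1) * (1 + s * fieldSlope k 0 (x i)) ^ (a - 1) := by
    rw [fieldStep_eq_mul, Real.mul_rpow (hx' i).1
      (one_add_mul_fieldSlope_pos hs ⟨le_rfl, zero_le_one⟩ (hx' i)).le]
  have hone (i : Fin N) : (1 - fieldStep k s (x i)) ^ (b - 1) =
      (1 - x i) ^ (b - 1) * (1 + s * fieldSlope k 1 (x i)) ^ (b - 1) := by
    rw [one_sub_fieldStep, Real.mul_rpow (sub_nonneg.2 (hx' i).2)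
      (one_add_mul_fieldSlope_pos hs ⟨zero_le_one, le_rfl⟩ (hx' i)).le]
  simp only [selbergWeight, stepDensity, Function.comp_apply, hpair, hzero, hone,
    prod_mul_distrib]
  ring

theorem setIntegral_comp_fieldStep_mul_stepDensity (hs : |s| * (k + 2) < 1)
    (f : (Fin N → ℝ) → ℝ) :
    ∫ x in Set.Icc 0 1, f (fieldStep k s ∘ x) * stepDensity θ a b k s x * selbergWeight θ a b x =
      ∫ x in Set.Icc 0 1, f x * selbergWeight θ a b x := by
  have hcv := setIntegral_univ_pi_image (ι := Fin N) measurableSet_Icc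
    (fun t _ => (hasDerivAt_fieldStep k s t).hasDerivWithinAt) (injOn_fieldStep hs)
    fun x => f x * selbergWeight θ a b x
  have hcube : Set.univ.pi (fun _ : Fin N => Set.Icc (0 : ℝ) 1) = Set.Icc 0 1 :=
    Set.pi_univ_Icc _ _
  rw [image_fieldStep_Icc hs, hcube] at hcv
  rw [hcv]
  refine setIntegral_congr_fun measurableSet_Icc fun x hx => ?_
  have hdet : 0 ≤ ∏ i, (1 + s * fieldSlope k (x i) (x i)) := prod_nonneg fun i _ =>
    (one_add_mul_fieldSlope_pos hs (mem_Icc_apply hx i) (mem_Icc_apply hx i)).le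
  rw [abs_of_nonneg hdet, mul_left_comm, prod_mul_selbergWeight_comp_fieldStep hs hx, mul_assoc]

end ChangeOfVariables

section DerivativeAtZero

theorem hasDerivAt_setIntegral_mul_of_contDiffAt {E : Type*} [NormedAddCommGroup E]
    [NormedSpace ℝ E] [MeasurableSpace E] [OpensMeasurableSpace E] {μ : Measure E} {K : Set E}
    (hK : IsCompact K) {G : ℝ × E → ℝ} {w g : E → ℝ} {s₀ : ℝ} (hw : IntegrableOn w K μ)
    (hG : ∀ x ∈ K, ContDiffAt ℝ 1 G (s₀, x))
    (hg : ∀ x ∈ K, HasDerivAt (fun s => G (s, x)) (g x) s₀) :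
    HasDerivAt (fun s => ∫ x in K, G (s, x) * w x ∂μ) (∫ x in K, g x * w x ∂μ) s₀ := by
  set G' : ℝ × E → ℝ := fun q => fderiv ℝ G q (1, 0)
  have hslice {q : ℝ × E} (hq : ContDiffAt ℝ 1 G q) :
      HasDerivAt (fun s => G (s, q.2)) (G' q) q.1 :=
    (hq.differentiableAt one_ne_zero).hasFDerivAt.comp_hasDerivAt q.1
      ((hasDerivAt_id q.1).prodMk (hasDerivAt_const q.1 q.2))
  have hslice_cont {F : ℝ × E → ℝ} {s : ℝ} (hF : ∀ x ∈ K, ContinuousAt F (s, x)) :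
      ContinuousOn (fun x => F (s, x)) K := fun x hx =>
    ((hF x hx).comp (f := fun y => (s, y)) (by fun_prop)).continuousWithinAt
  have hG'_cont : ∀ x ∈ K, ContinuousAt G' (s₀, x) := fun x hx =>
    ((hG x hx).fderiv_right (m := 0) le_rfl).continuousAt.clm_apply continuousAt_const
  obtain ⟨C, hC⟩ := hK.exists_bound_of_continuousOn (hslice_cont hG'_cont)
  have hnear : ∀ᶠ s in nhds s₀, ∀ x ∈ K, ContDiffAt ℝ 1 G (s, x) ∧ ‖G' (s, x)‖ ≤ C + 1 :=
    hK.eventually_forall_of_forall_eventually fun x hx =>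
      ((hG x hx).eventually (by simp)).and ((hG'_cont x hx).norm.eventually_le_const
        ((hC x hx).trans_lt (lt_add_one C)))
  have hwm := hw.aestronglyMeasurable
  have hderiv := hasDerivAt_integral_of_dominated_loc_of_deriv_le hnear
    (F := fun s x => G (s, x) * w x) (F' := fun s x => G' (s, x) * w x)
    (bound := fun x => (C + 1) * ‖w x‖) (μ := μ.restrict K)
    (hnear.mono fun s hs => ((hslice_cont fun x hx => (hs x hx).1.continuousAt)
      |>.aestronglyMeasurable_of_isCompact hK hK.measurableSet).mul hwm)
    (hw.continuousOn_mul (hslice_cont fun x hx => (hG x hx).continuousAt) hK)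
    (((hslice_cont hG'_cont).aestronglyMeasurable_of_isCompact hK hK.measurableSet).mul hwm)
    (ae_restrict_of_forall_mem hK.measurableSet fun x hx s hs => by
      rw [norm_mul]; exact mul_le_mul_of_nonneg_right (hs x hx).2 (norm_nonneg _))
    (hw.norm.const_mul _)
    (ae_restrict_of_forall_mem hK.measurableSet fun x hx s hs =>
      (hslice (hs x hx).1).mul_const (w x))
  refine hderiv.2.congr_deriv (setIntegral_congr_fun hK.measurableSet fun x hx => ?_)
  rw [(hg x hx).unique (hslice (hG x hx))]

theorem hasDerivAt_eval_of_derivation {σ : Type*}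
    (D : Derivation ℝ (MvPolynomial σ ℝ) (MvPolynomial σ ℝ)) {c : ℝ → σ → ℝ} {s₀ : ℝ}
    (hc : ∀ i, HasDerivAt (fun s => c s i) (eval (c s₀) (D (X i))) s₀) (p : MvPolynomial σ ℝ) :
    HasDerivAt (fun s => eval (c s) p) (eval (c s₀) (D p)) s₀ := by
  induction p using MvPolynomial.induction_on with
  | C r => simpa using hasDerivAt_const s₀ r
  | add p q hp hq => simpa using hp.fun_add hq
  | mul_X p i hp =>
    simp only [map_mul, eval_X, Derivation.leibniz, smul_eq_mul, map_add]
    exact (hp.mul (hc i)).congr_deriv (by ring)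

theorem hasDerivAt_prod_one_add_mul_rpow {ι : Type*} (u : Finset ι) (c : ι → ℝ) (p : ℝ) :
    HasDerivAt (fun s => ∏ i ∈ u, (1 + s * c i) ^ p) (p * ∑ i ∈ u, c i) 0 := by
  have hfactor : ∀ i ∈ u, HasDerivAt (fun s => (1 + s * c i) ^ p) (p * c i) 0 := fun i _ => by
    have hbase : HasDerivAt (fun s => 1 + s * c i) (c i) 0 := by
      simpa using ((hasDerivAt_id (0 : ℝ)).mul_const (c i)).const_add 1
    simpa [mul_comm] using hbase.rpow_const (p := p) (Or.inl (by simp))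
  simpa [mul_sum] using HasDerivAt.fun_finsetProd hfactor

theorem two_mul_sum_filter_lt_add_sum_diag {ι R : Type*} [Fintype ι] [LinearOrder ι] [Semiring R]
    {f : ι → ι → R} (hf : ∀ i j, f i j = f j i) :
    2 * ∑ p : ι × ι with p.1 < p.2, f p.1 p.2 + ∑ i, f i i = ∑ i, ∑ j, f i j := by
  have hswap : ∑ p : ι × ι with p.2 < p.1, f p.1 p.2 = ∑ p : ι × ι with p.1 < p.2, f p.1 p.2 :=
    sum_equiv (Equiv.prodComm ι ι) (by simp) fun p _ => hf p.1 p.2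
  have hdiag : ∑ p : ι × ι with p.1 = p.2, f p.1 p.2 = ∑ i, f i i := by
    simp only [sum_filter, Fintype.sum_prod_type, sum_ite_eq, mem_univ, if_true]
  rw [two_mul, ← Fintype.sum_prod_type']
  nth_rw 2 [← hswap]
  rw [← hdiag]
  simp only [sum_filter, ← sum_add_distrib]
  refine sum_congr rfl fun p _ => ?_
  rcases lt_trichotomy p.1 p.2 with h | h | h
  · simp [h, h.ne, h.not_gt]
  · simp [h]
  · simp [h, h.ne', h.not_gt]

variable {θ a b : ℝ} {k N : ℕ}

theorem sum_sum_fieldSlope (k : ℕ) (x : Fin N → ℝ) : ∑ i, ∑ j, fieldSlope k (x i) (x j) =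
    eval x (∑ l ∈ range (k + 1), psum (Fin N) ℝ l * psum (Fin N) ℝ (k - l) -
      ∑ l ∈ range (k + 2), psum (Fin N) ℝ l * psum (Fin N) ℝ (k + 1 - l)) := by
  have hsum (n m : ℕ) : ∑ i, ∑ j, ∑ l ∈ range n, x i ^ l * x j ^ (m - l) =
      ∑ l ∈ range n, (∑ i, x i ^ l) * ∑ i, x i ^ (m - l) := by
    simp only [sum_mul_sum]
    rw [sum_comm (s := range n)]
    exact sum_congr rfl fun i _ => sum_comm
  simp only [fieldSlope, sum_sub_distrib, hsum, psum, map_sub, map_sum, map_mul, map_pow, eval_X]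

theorem stepDensity_zero (x : Fin N → ℝ) : stepDensity θ a b k 0 x = 1 := by
  simp [stepDensity]

theorem hasDerivAt_stepDensity (x : Fin N → ℝ) :
    HasDerivAt (fun s => stepDensity θ a b k s x) (eval x (jacobiDrift (Fin N) θ a b k)) 0 := by
  have hpair := hasDerivAt_prod_one_add_mul_rpow {p : Fin N × Fin N | p.1 < p.2}
    (fun p => fieldSlope k (x p.1) (x p.2)) (2 * θ)
  have hzero := hasDerivAt_prod_one_add_mul_rpow univ (fun i => fieldSlope k 0 (x i)) (a - 1)
  have hone := hasDerivAt_prod_one_add_mul_rpow univ (fun i => fieldSlope k 1 (x i)) (b - 1)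
  have hdet := hasDerivAt_prod_one_add_mul_rpow univ (fun i => fieldSlope k (x i) (x i)) 1
  simp only [Real.rpow_one] at hdet
  refine (((hpair.mul hzero).mul hone).mul hdet).congr_deriv ?_
  have hpairs := two_mul_sum_filter_lt_add_sum_diag fun i j => fieldSlope_comm k (x i) (x j)
  rw [sum_sum_fieldSlope] at hpairs
  have hpsum (j : ℕ) : eval x (psum (Fin N) ℝ j) = ∑ i, x i ^ j := by simp [psum]
  rw [jacobiDrift, map_sub, map_add, smul_eval, smul_eval, smul_eval, ← hpairs, hpsum, hpsum]
  simp only [Pi.mul_apply, zero_mul, add_zero, Real.one_rpow, prod_const_one, mul_one, one_mul,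
    fieldSlope_zero_left, fieldSlope_one_left, fieldSlope_self, sum_sub_distrib, ← mul_sum,
    sum_neg_distrib]
  ring

theorem contDiffAt_comp_fieldStep_mul_stepDensity (p : MvPolynomial (Fin N) ℝ)
    (x : Fin N → ℝ) : ContDiffAt ℝ 1 (fun q : ℝ × (Fin N → ℝ) =>
      eval (fieldStep k q.1 ∘ q.2) p * stepDensity θ a b k q.1 q.2) (0, x) := by
  have heval : ContDiff ℝ 1 fun y : Fin N → ℝ => eval y p :=
    (AnalyticOnNhd.eval_mvPolynomial p).contDiff
  have hstep : ContDiff ℝ 1 fun q : ℝ × (Fin N → ℝ) => fieldStep k q.1 ∘ q.2 :=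
    contDiff_pi.2 fun i => by simp only [Function.comp_apply]; fun_prop
  have hslope {t u : ℝ × (Fin N → ℝ) → ℝ} (ht : ContDiff ℝ 1 t) (hu : ContDiff ℝ 1 u) :
      ContDiffAt ℝ 1 (fun q => 1 + q.1 * fieldSlope k (t q) (u q)) (0, x) := by fun_prop
  have hrpow {t u : ℝ × (Fin N → ℝ) → ℝ} (ht : ContDiff ℝ 1 t) (hu : ContDiff ℝ 1 u) (r : ℝ) :
      ContDiffAt ℝ 1 (fun q => (1 + q.1 * fieldSlope k (t q) (u q)) ^ r) (0, x) :=
    (hslope ht hu).rpow_const_of_ne (by simp)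
  unfold stepDensity
  refine (heval.comp hstep).contDiffAt.mul (((ContDiffAt.mul ?_ ?_).mul ?_).mul ?_) <;>
    refine contDiffAt_prod fun i _ => ?_
  · exact hrpow (by fun_prop) (by fun_prop) _
  · exact hrpow (by fun_prop) (by fun_prop) _
  · exact hrpow (by fun_prop) (by fun_prop) _
  · exact hslope (by fun_prop) (by fun_prop)

theorem setIntegral_cubeField_add_mul_jacobiDrift
    (hw : IntegrableOn (selbergWeight θ a b) (Set.Icc (0 : Fin N → ℝ) 1)) (k : ℕ)
    (p : MvPolynomial (Fin N) ℝ) :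
    ∫ x in Set.Icc 0 1, eval x (cubeField (Fin N) k p + p * jacobiDrift (Fin N) θ a b k) *
      selbergWeight θ a b x = 0 := by
  have hfield (x : Fin N → ℝ) : HasDerivAt (fun s => eval (fieldStep k s ∘ x) p)
      (eval x (cubeField (Fin N) k p)) 0 := by
    have h := hasDerivAt_eval_of_derivation (cubeField (Fin N) k)
      (c := fun s => fieldStep k s ∘ x) (s₀ := 0) (fun i => ?_) p
    · simpa [fieldStep_zero] using h
    · simpa [fieldStep, fieldStep_zero, cubeField] using
        ((hasDerivAt_id (0 : ℝ)).mul_const (x i ^ (k + 1) - x i ^ (k + 2))).const_add (x i)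
  have hderiv := hasDerivAt_setIntegral_mul_of_contDiffAt isCompact_Icc hw
    (fun x _ => contDiffAt_comp_fieldStep_mul_stepDensity (θ := θ) (a := a) (b := b) p x)
    fun x _ => (hfield x).mul (hasDerivAt_stepDensity x)
  have hsmall : ∀ᶠ s : ℝ in nhds 0, |s| * (k + 2) < 1 :=
    (show Continuous fun s : ℝ => |s| * (k + 2) by fun_prop).continuousAt.eventually_lt_const
      (by simp)
  have hconst := (hasDerivAt_const (0 : ℝ) _).congr_of_eventuallyEq <| hsmall.mono fun s hs =>
    setIntegral_comp_fieldStep_mul_stepDensity (θ := θ) (a := a) (b := b) hs fun x => eval x p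
  simpa [fieldStep_zero, stepDensity_zero] using hderiv.unique hconst

end DerivativeAtZero

section Moments

variable {σ : Type*} (μ : Measure (σ → ℝ))

/-- Integration of polynomials against a measure with finite moments. -/
def momentFunctional (hμ : ∀ p : MvPolynomial σ ℝ, Integrable (fun x => eval x p) μ) :
    MvPolynomial σ ℝ →ₗ[ℝ] ℝ where
  toFun p := ∫ x, eval x p ∂μ
  map_add' p q := by simp only [map_add, integral_add (hμ p) (hμ q)]
  map_smul' r p := by simp only [smul_eval, integral_const_mul, RingHom.id_apply, smul_eq_mul]

variable {μ} (hμ : ∀ p : MvPolynomial σ ℝ, Integrable (fun x => eval x p) μ)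

theorem momentFunctional_apply (p : MvPolynomial σ ℝ) :
    momentFunctional μ hμ p = ∫ x, eval x p ∂μ := rfl

theorem momentFunctional_one [IsProbabilityMeasure μ] : momentFunctional μ hμ 1 = 1 := by
  simp [momentFunctional_apply]

theorem jointCumulant_powerSum_eq_coeff_logDeriv [Fintype σ] [IsProbabilityMeasure μ] {m : ℕ}
    (k : Fin m → ℕ) (i₀ : Fin m) :
    jointCumulant μ (fun i x => ((∑ j, x j ^ k i : ℝ) : ℂ)) =
      (ExpSeries.coeff ((univ.erase i₀).val.map k)
        (ExpSeries.logDeriv (psumSeries (momentFunctional μ hμ)) (k i₀)) : ℝ) := by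
  have hone : ExpSeries.coeff 0 (psumSeries (momentFunctional μ hμ)) = 1 := by
    simpa [coeff_psumSeries] using momentFunctional_one hμ
  rw [ExpSeries.coeff_logDeriv_eq_partitionCumulant hone k (notMem_erase i₀ univ),
    insert_erase (mem_univ i₀), jointCumulant_ofReal]
  congr 3
  ext T
  rw [coeff_psumSeries, Multiset.map_map, momentFunctional_apply]
  change _ = ∫ x, eval x (∏ i ∈ T, psum σ ℝ (k i)) ∂μ
  simp only [psum, map_prod, map_sum, map_pow, eval_X]

variable {θ α : ℝ} {M N : ℕ}

theorem integrable_eval_jacobiEnsemble [IsFiniteMeasure (jacobiEnsemble θ α M N)]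
    (p : MvPolynomial (Fin N) ℝ) : Integrable (fun x => eval x p) (jacobiEnsemble θ α M N) :=
  integrable_jacobiEnsemble p.continuous_eval

theorem loopEquations_jacobiEnsemble [IsProbabilityMeasure (jacobiEnsemble θ α M N)] (hθ : 0 < θ)
    (hα : 0 < α) (hM : N ≤ M) :
    ExpSeries.LoopEquations θ (θ * α) (θ * ((M : ℝ) - N) + θ) N
      (psumSeries (momentFunctional (jacobiEnsemble θ α M N) integrable_eval_jacobiEnsemble)) := by
  have hloop := loopEquations_psumSeries _ (momentFunctional_one integrable_eval_jacobiEnsemble)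
    (θ := θ) (a := θ * α) (b := θ * ((M : ℝ) - N) + θ) fun k p => by
      rw [momentFunctional_apply, integral_jacobiEnsemble, jacobiDensity_eq_selbergWeight,
        setIntegral_cubeField_add_mul_jacobiDrift (integrableOn_selbergWeight hθ.le
          (mul_pos hθ hα) (mul_sub_add_pos hθ hM)), mul_zero]
  rwa [Fintype.card_fin] at hloop

end Moments

theorem exists_norm_jointCumulant_powerSum_le {θ : ℝ} (hθ : 0 < θ) {r : ℕ} (k : Fin (r + 2) → ℕ) :
    ∃ C n₀ : ℝ, ∀ N : ℕ, n₀ ≤ N → ∀ α > 0, ∀ M ≥ N,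
      ‖jointCumulant (jacobiEnsemble θ α M N) fun i y => ((∑ j, y j ^ k i : ℝ) : ℂ)‖ ≤
        C / (N : ℝ) ^ r := by
  set s : Multiset ℕ := (univ.erase 0).val.map k
  obtain ⟨C, n₀, hC⟩ := ExpSeries.exists_forall_abs_coeff_scaledCumulant_le hθ (k 0 + s.sum)
  refine ⟨C, max n₀ 1, fun N hN α hα M hM => ?_⟩
  have := isProbabilityMeasure_jacobiEnsemble hθ hα hM
  have hN_pos : (0 : ℝ) < N := zero_lt_one.trans_le ((le_max_right _ _).trans hN)
  have hcard : s.card = r + 1 := by simp [s]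
  have hbound := hC N ((le_max_left _ _).trans hN) (θ * α) (mul_pos hθ hα).le _
    (mul_sub_add_pos hθ hM).le _ (loopEquations_jacobiEnsemble hθ hα hM) (k 0) s le_rfl
  rw [ExpSeries.scaledCumulant, map_smul, smul_eq_mul, ExpSeries.coeff_rescale, hcard,
    pow_succ', ← mul_assoc, ← mul_assoc, inv_mul_cancel₀ hN_pos.ne', one_mul, abs_mul,
    abs_of_pos (pow_pos hN_pos r)] at hbound
  rw [jointCumulant_powerSum_eq_coeff_logDeriv integrable_eval_jacobiEnsemble k 0,
    Complex.norm_real, le_div_iff₀' (pow_pos hN_pos r)]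
  exact hbound

end Jacobi

end

theorem jacobi_higher_cumulants_vanish_general
    (θ : ℝ) (hθ : 0 < θ) (α : ℕ → ℝ) (M : ℕ → ℕ)
    (hα : ∀ N : ℕ, 1 ≤ N → 0 < α N) (hM : ∀ N : ℕ, 1 ≤ N → N ≤ M N)
    (m : ℕ) (hm : 3 ≤ m) (k : Fin m → ℕ) :
    Filter.Tendsto
      (fun N : ℕ => jointCumulant (jacobiEnsemble θ (α N) (M N) N)
        (fun i y => ((∑ j : Fin N, (y j) ^ (k i) : ℝ) : ℂ)))
      Filter.atTop (nhds 0) := by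
  obtain ⟨r, rfl⟩ := Nat.exists_eq_add_of_le' hm
  obtain ⟨C, n₀, hC⟩ := Jacobi.exists_norm_jointCumulant_powerSum_le hθ (r := r + 1) k
  have hlim : Filter.Tendsto (fun N : ℕ => C / (N : ℝ) ^ (r + 1)) Filter.atTop (nhds 0) :=
    (tendsto_const_div_pow C (r + 1) r.succ_ne_zero).comp tendsto_natCast_atTop_atTop
  refine squeeze_zero_norm' ?_ hlim
  filter_upwards [Filter.eventually_ge_atTop 1,
    tendsto_natCast_atTop_atTop.eventually_ge_atTop n₀] with N hN hN₀
  exact hC N hN₀ (α N) (hα N hN) (M N) (hM N hN)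

/-- **Vanishing of higher joint cumulants for a single β-Jacobi ensemble** (equal-times
case of the paper's Theorem 5.3): for `m ≥ 3`,
`κ(𝔓_{k₁}(y),…,𝔓_{k_m}(y)) → 0` as `N → ∞`. -/
theorem jacobi_higher_cumulants_vanish
    (θ : ℝ) (hθ : 0 < θ) (α : ℕ → ℝ) (M : ℕ → ℕ)
    (hα : ∀ N : ℕ, 1 ≤ N → 0 < α N) (hM : ∀ N : ℕ, 1 ≤ N → N ≤ M N)
    (αhat Mhat : ℝ) (hαhat : 0 ≤ αhat)
    (hαlim : Filter.Tendsto (fun N : ℕ => α N / (N : ℝ)) Filter.atTop (nhds αhat))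
    (hMlim : Filter.Tendsto (fun N : ℕ => (M N : ℝ) / (N : ℝ)) Filter.atTop (nhds Mhat))
    (m : ℕ) (hm : 3 ≤ m) (k : Fin m → ℕ) (hk : ∀ i, 0 < k i) :
    Filter.Tendsto
      (fun N : ℕ => jointCumulant (jacobiEnsemble θ (α N) (M N) N)
        (fun i y => ((∑ j : Fin N, (y j) ^ (k i) : ℝ) : ℂ)))
      Filter.atTop (nhds 0) :=
  jacobi_higher_cumulants_vanish_general θ hθ α M hα hM m hm k
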